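/- arXiv:1902.06404 — 3 statements merged into one kernel-verified Lean document; each statement's English description precedes it below -/
import Mathlib

section
/- In the r-state Markov chain model, if at least one of the trace lengths m(n) or l(n) is less than or equal to c·n^{2/(|E|−r)−α} for some constants c > 0 and α > 0, then user 1 has perfect anonymity: the Shannon conditional entropy H(Π(1) | W, Y) tends to +∞ as n → ∞. -/
open MeasureTheory ProbabilityTheory Filter
open scoped ENNReal NNReal

/-- The open region `{x ∈ (0,1)^d : xᵢ > 0, x₁ + ⋯ + x_d < 1}` of admissible parameters. -/
def simplexRegion (d : ℕ) : Set (Fin d → ℝ) :=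
  {x | (∀ i, 0 < x i) ∧ ∑ i, x i < 1}

/-- Law of a length-`m` sample path of the Markov chain on `Fin r` with transition
matrix `M` and initial distribution `π0`: the path `x` has probability
`π0 (x 0) * ∏_{k>0} M (x (k-1)) (x k)`. -/
noncomputable def pathLaw {r : ℕ} (M : Matrix (Fin r) (Fin r) ℝ) (π0 : Fin r → ℝ) (m : ℕ) :
    Measure (Fin m → Fin r) :=
  ∑ x : Fin m → Fin r,
    ENNReal.ofReal (∏ k : Fin m,
      if (k : ℕ) = 0 then π0 (x k)
      else M (x ⟨(k : ℕ) - 1, lt_of_le_of_lt (Nat.sub_le _ _) k.isLt⟩) (x k)) •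
    Measure.dirac x

/-- Joint law of (parameters, actual traces, training traces) in the `r`-state Markov chain
model: the parameter vectors `p u` (of dimension `d = |E| - r`) are i.i.d. with law `μP`,
and conditionally on the parameters the actual trace (of length `m`) and the training trace
(of length `l`) of user `u` are independent sample paths of the Markov chain with transition
matrix `T (p u)` and initial distribution `π0 (p u)`; all traces are mutually independent
across users. -/
noncomputable def markovLaw (n m l r d : ℕ) (T : (Fin d → ℝ) → Matrix (Fin r) (Fin r) ℝ)
    (π0 : (Fin d → ℝ) → Fin r → ℝ) (μP : Measure (Fin d → ℝ)) :
    Measure ((Fin n → Fin d → ℝ) × (Fin n → Fin m → Fin r) × (Fin n → Fin l → Fin r)) :=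
  (Measure.pi fun _ : Fin n => μP).bind fun p =>
    (Measure.dirac p).prod
      ((Measure.pi fun u : Fin n => pathLaw (T (p u)) (π0 (p u)) m).prod
        (Measure.pi fun u : Fin n => pathLaw (T (p u)) (π0 (p u)) l))

/-- Shannon conditional entropy `H(A | B)` of discrete random variables `A` and `B`. -/
noncomputable def shCondEntropy {Ω α β : Type*} [MeasurableSpace Ω] (μ : Measure Ω)
    (A : Ω → α) (B : Ω → β) : ℝ :=
  -∑' (a : α) (b : β),
    (μ (A ⁻¹' {a} ∩ B ⁻¹' {b})).toReal *
      Real.log ((μ (A ⁻¹' {a} ∩ B ⁻¹' {b})).toReal / (μ (B ⁻¹' {b})).toReal)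



noncomputable def pMarg {n : ℕ} {β : Type*} (p : Equiv.Perm (Fin n) → β → ℝ) (u v : Fin n) (b : β) : ℝ :=
  ∑ σ, if σ u = v then p σ b else 0

noncomputable def pTot {n : ℕ} {β : Type*} (p : Equiv.Perm (Fin n) → β → ℝ) (b : β) : ℝ :=
  ∑ σ, p σ b

lemma pMarg_sum {n : ℕ} {β : Type*} (p : Equiv.Perm (Fin n) → β → ℝ) (u : Fin n) (b : β) :
    ∑ v, pMarg p u v b = pTot p b := by
  unfold pMarg pTot
  rw [Finset.sum_comm]
  simp

lemma pMarg_mul_sum {n : ℕ} {β : Type*} (p : Equiv.Perm (Fin n) → β → ℝ) (u : Fin n) (b : β)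
    (g : Fin n → ℝ) :
    ∑ v, pMarg p u v b * g v = ∑ σ, p σ b * g (σ u) := by
  unfold pMarg
  simp_rw [Finset.sum_mul]
  rw [Finset.sum_comm]
  refine Finset.sum_congr rfl fun σ _ => ?_
  simp [ite_mul]

lemma prod_perm_le {n : ℕ} (g : Fin n → Fin n → ℝ) (hg : ∀ u v, 0 ≤ g u v)
    (h1 : ∀ u, ∑ v, g u v ≤ 1) : ∑ σ : Equiv.Perm (Fin n), ∏ u, g u (σ u) ≤ 1 := by
  have h2 : ∑ φ : Fin n → Fin n, ∏ u, g u (φ u) ≤ 1 := by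
    rw [← Fintype.prod_sum]
    exact Finset.prod_le_one (fun u _ => Finset.sum_nonneg fun v _ => hg u v) fun u _ => h1 u
  refine le_trans ?_ h2
  have h3 : ∑ σ : Equiv.Perm (Fin n), ∏ u, g u (σ u) =
      ∑ φ ∈ Finset.univ.map ⟨fun σ : Equiv.Perm (Fin n) => (σ : Fin n → Fin n),
        DFunLike.coe_injective⟩, ∏ u, g u (φ u) := by
    rw [Finset.sum_map]; rfl
  rw [h3]
  exact Finset.sum_le_sum_of_subset_of_nonneg (Finset.subset_univ _)
    fun φ _ _ => Finset.prod_nonneg fun u _ => hg _ _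

lemma finite_entropy {n : ℕ} {β : Type*} [Fintype β] (p : Equiv.Perm (Fin n) → β → ℝ)
    (hp : ∀ σ b, 0 ≤ p σ b) (hsum : ∑ σ, ∑ b, p σ b = 1)
    (hsymm : ∀ τ : Equiv.Perm (Fin n), ∃ e : β ≃ β, ∀ σ b, p (σ * τ) (e b) = p σ b)
    (R : β → ℝ) (hR : ∀ b, 0 ≤ R b) (hRs : ∑ b, R b ≤ 1) (D : ℝ) (hD : 0 < D)
    (hb : ∀ σ b, p σ b ≤ D * R b) (u0 : Fin n) :
    - Real.log D ≤ n * - ∑ v, ∑ b, pMarg p u0 v b * Real.log (pMarg p u0 v b / pTot p b) := by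
  set S : ℝ := ∑ v, ∑ b, pMarg p u0 v b * Real.log (pMarg p u0 v b / pTot p b) with hS
  have h1 : ∀ u, ∑ v, ∑ b, pMarg p u v b * Real.log (pMarg p u v b / pTot p b) = S := by
    intro u
    obtain ⟨e, he⟩ := hsymm (Equiv.swap u0 u)
    have hm : ∀ v b, pMarg p u0 v (e b) = pMarg p u v b := by
      intro v b
      unfold pMarg
      rw [← Equiv.sum_comp (Equiv.mulRight (Equiv.swap u0 u))]
      refine Finset.sum_congr rfl fun σ _ => ?_
      simp [he]
    have ht : ∀ b, pTot p (e b) = pTot p b := by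
      intro b
      rw [← pMarg_sum p u0, ← pMarg_sum p u]
      exact Finset.sum_congr rfl fun v _ => hm v b
    rw [hS]
    refine Finset.sum_congr rfl fun v _ => ?_
    rw [← Equiv.sum_comp e (fun b => pMarg p u0 v b * Real.log (pMarg p u0 v b / pTot p b))]
    refine Finset.sum_congr rfl fun b _ => ?_
    rw [hm, ht]
  have hm0 : ∀ u v b, 0 ≤ pMarg p u v b := fun u v b =>
    Finset.sum_nonneg fun σ _ => by split_ifs <;> simp [hp]
  have ht0 : ∀ b, 0 ≤ pTot p b := fun b => Finset.sum_nonneg fun σ _ => hp σ b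
  have h2 : (n : ℝ) * S = ∑ b, ∑ σ, p σ b * ∑ u, Real.log (pMarg p u (σ u) b / pTot p b) := by
    have : (n : ℝ) * S = ∑ u : Fin n, ∑ v, ∑ b, pMarg p u v b * Real.log (pMarg p u v b / pTot p b) := by
      rw [Finset.sum_congr rfl fun u _ => h1 u]; simp
    rw [this]
    have h : ∀ u, ∑ v, ∑ b, pMarg p u v b * Real.log (pMarg p u v b / pTot p b) =
        ∑ b, ∑ σ, p σ b * Real.log (pMarg p u (σ u) b / pTot p b) := by
      intro u
      rw [Finset.sum_comm]
      refine Finset.sum_congr rfl fun b _ => ?_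
      exact pMarg_mul_sum p u b fun v => Real.log (pMarg p u v b / pTot p b)
    rw [Finset.sum_congr rfl fun u _ => h u, Finset.sum_comm]
    refine Finset.sum_congr rfl fun b _ => ?_
    rw [Finset.sum_comm]
    simp_rw [Finset.mul_sum]
  have h3 : ∀ b σ, p σ b * (∑ u, Real.log (pMarg p u (σ u) b / pTot p b)) + p σ b * (- Real.log D) ≤
      R b * ∏ u, (pMarg p u (σ u) b / pTot p b) - p σ b := by
    intro b σ
    have hq : 0 ≤ ∏ u, (pMarg p u (σ u) b / pTot p b) :=
      Finset.prod_nonneg fun u _ => div_nonneg (hm0 _ _ _) (ht0 _)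
    rcases (hp σ b).eq_or_lt with h0 | h0
    · rw [← h0]; simpa using mul_nonneg (hR b) hq
    · have hmp : ∀ u, 0 < pMarg p u (σ u) b := fun u =>
        lt_of_lt_of_le h0 (by
          unfold pMarg
          refine le_trans (by simp) (Finset.single_le_sum (f := fun σ' => if σ' u = σ u then p σ' b else 0) (fun σ' _ => ?_) (Finset.mem_univ σ))
          split_ifs <;> simp [hp])
      have htp : 0 < pTot p b := lt_of_lt_of_le h0
        (Finset.single_le_sum (f := fun σ' => p σ' b) (fun σ' _ => hp σ' b) (Finset.mem_univ σ))
      have hqp : 0 < ∏ u, (pMarg p u (σ u) b / pTot p b) :=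
        Finset.prod_pos fun u _ => div_pos (hmp u) htp
      rw [← Real.log_prod (fun u _ => (div_pos (hmp u) htp).ne')]
      set q := ∏ u, (pMarg p u (σ u) b / pTot p b)
      have hl : Real.log q + - Real.log D = Real.log (q / D) := by
        rw [Real.log_div hqp.ne' hD.ne']; ring
      rw [← mul_add, hl]
      have hle := Real.log_le_sub_one_of_pos (div_pos hqp hD)
      calc p σ b * Real.log (q / D) ≤ p σ b * (q / D - 1) := by gcongr
        _ = p σ b / D * q - p σ b := by ring
        _ ≤ R b * q - p σ b := by
          have : p σ b / D ≤ R b := by rw [div_le_iff₀ hD, mul_comm]; exact hb σ b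
          gcongr
  have h4 : ∀ b, ∑ σ : Equiv.Perm (Fin n), R b * ∏ u, (pMarg p u (σ u) b / pTot p b) ≤ R b := by
    intro b
    rw [← Finset.mul_sum]
    refine mul_le_of_le_one_right (hR b) (prod_perm_le (fun u v => pMarg p u v b / pTot p b)
      (fun u v => div_nonneg (hm0 _ _ _) (ht0 _)) fun u => ?_)
    rw [← Finset.sum_div, pMarg_sum]
    exact div_self_le_one _
  have hsum' : ∑ b, ∑ σ, p σ b = 1 := by rw [Finset.sum_comm]; exact hsum
  have h5 := Finset.sum_le_sum fun b (_ : b ∈ Finset.univ) =>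
    Finset.sum_le_sum fun σ (_ : σ ∈ Finset.univ) => h3 b σ
  simp_rw [Finset.sum_add_distrib, Finset.sum_sub_distrib, ← Finset.sum_mul] at h5
  rw [← h2, hsum'] at h5
  have h6 := Finset.sum_le_sum fun b (_ : b ∈ Finset.univ) => h4 b
  linarith


lemma kt_aux (h : ℝ) (h0 : 0 ≤ h) (h1 : h < 1) :
    (1 + h) * Real.log (1 + h) - (1 - h) * Real.log (1 - h) ≤ 2 * h := by
  have key : MonotoneOn (fun x : ℝ => 2 * x - ((1 + x) * Real.log (1 + x) - (1 - x) * Real.log (1 - x)))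
      (Set.Ico 0 1) := by
    have hder : ∀ x ∈ Set.Ico (0:ℝ) 1, HasDerivAt (fun x : ℝ => 2 * x - ((1 + x) * Real.log (1 + x) - (1 - x) * Real.log (1 - x)))
        (- Real.log (1 - x ^ 2)) x := by
      intro x hx
      have hp : (1 + x) ≠ 0 := by linarith [hx.1]
      have hm : (1 - x) ≠ 0 := by linarith [hx.2]
      have e1 : HasDerivAt (fun x : ℝ => 1 + x) 1 x := (hasDerivAt_id x).const_add 1
      have e2 : HasDerivAt (fun x : ℝ => 1 - x) (-1) x := (hasDerivAt_id x).const_sub 1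
      have := ((hasDerivAt_id x).const_mul 2).sub ((e1.mul (e1.log hp)).sub (e2.mul (e2.log hm)))
      refine this.congr_deriv ?_
      have : 1 - x ^ 2 = (1 + x) * (1 - x) := by ring
      rw [this, Real.log_mul hp hm]
      field_simp
      ring
    refine monotoneOn_of_deriv_nonneg (convex_Ico 0 1) (fun x hx => (hder x hx).continuousAt.continuousWithinAt)
      (fun x hx => (hder x (interior_subset hx)).differentiableAt.differentiableWithinAt) fun x hx => ?_
    have hx' := interior_subset hx
    rw [(hder x hx').deriv]
    have : Real.log (1 - x ^ 2) ≤ 0 := Real.log_nonpos (by nlinarith [hx'.1, hx'.2]) (by nlinarith [hx'.1])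
    linarith
  have := key (show (0:ℝ) ∈ Set.Ico (0:ℝ) 1 by simp) ⟨h0, h1⟩ h0
  simp at this
  linarith

lemma kt_step (n : ℕ) : ((n:ℝ) + 1) * Real.log (n + 1) - n * Real.log n - 1 ≤ Real.log (n + 1 / 2) := by
  rcases Nat.eq_zero_or_pos n with rfl | hn
  · have := Real.log_two_lt_d9
    simp; linarith
  · have hn' : (0:ℝ) < n := by exact_mod_cast hn
    have hh := kt_aux (1 / (2 * n + 1)) (by positivity) (by rw [div_lt_one (by positivity)]; linarith)
    have e1 : (1:ℝ) + 1 / (2 * n + 1) = (n + 1) / (n + 1 / 2) := by field_simp; ring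
    have e2 : (1:ℝ) - 1 / (2 * n + 1) = n / (n + 1 / 2) := by field_simp; ring
    rw [e1, e2, Real.log_div (by positivity) (by positivity), Real.log_div (by positivity) (by positivity)] at hh
    have h3 : (n + 1 / 2 : ℝ) * (2 * (1 / (2 * n + 1))) = 1 := by field_simp
    have h4 := mul_le_mul_of_nonneg_left hh (show (0:ℝ) ≤ n + 1 / 2 by positivity)
    rw [h3] at h4
    have h5 : (n + 1 / 2 : ℝ) * ((n + 1) / (n + 1 / 2) * (Real.log (n + 1) - Real.log (n + 1 / 2)) -
      n / (n + 1 / 2) * (Real.log n - Real.log (n + 1 / 2))) =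
      (n + 1) * (Real.log (n + 1) - Real.log (n + 1 / 2)) - n * (Real.log n - Real.log (n + 1 / 2)) := by
      field_simp
    rw [h5] at h4
    linarith

noncomputable def ktA (n : ℕ) : ℝ := ∏ t ∈ Finset.range n, ((t:ℝ) + 1 / 2)
noncomputable def ktB (k N : ℕ) : ℝ := ∏ t ∈ Finset.range N, ((t:ℝ) + k / 2)

lemma ktA_pos (n : ℕ) : 0 < ktA n := Finset.prod_pos fun t _ => by positivity
lemma ktB_pos (k N : ℕ) (hk : 1 ≤ k) : 0 < ktB k N := Finset.prod_pos fun t _ => by positivity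

lemma ktA_log (n : ℕ) : n * Real.log n - n ≤ Real.log (ktA n) := by
  induction n with
  | zero => simp [ktA]
  | succ n ih =>
    have : ktA (n + 1) = ktA n * (n + 1 / 2) := Finset.prod_range_succ _ _
    rw [this, Real.log_mul (ktA_pos n).ne' (by positivity)]
    have := kt_step n
    push_cast
    linarith

lemma log_fact_le (N : ℕ) (hN : 1 ≤ N) :
    Real.log (N.factorial) ≤ 1 + Real.log N / 2 + N * Real.log N - N := by
  have h := Stirling.stirlingSeq'_antitone (Nat.zero_le (N - 1))
  simp only [Function.comp, Nat.succ_eq_add_one, Nat.sub_add_cancel hN, zero_add, Stirling.stirlingSeq_one] at h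
  unfold Stirling.stirlingSeq at h
  have hN' : (0:ℝ) < N := by exact_mod_cast hN
  have hpos : (0:ℝ) < √(2 * N) * (N / Real.exp 1) ^ N := by positivity
  have h2 := Real.log_le_log (by positivity) h
  rw [Real.log_div (by positivity) hpos.ne', Real.log_mul (by positivity) (by positivity), Real.log_pow,
    Real.log_div (by positivity) (by positivity), Real.log_div (by positivity) (by positivity), Real.log_sqrt (by positivity),
    Real.log_sqrt (by positivity), Real.log_exp, Real.log_mul (by positivity) (by positivity)] at h2
  linarith

lemma ktB_log (k N : ℕ) (hk : 1 ≤ k) :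
    Real.log (ktB k N) ≤ N * Real.log N - N + ((k:ℝ) - 1) / 2 * Real.log (N + 1) + k := by
  rcases Nat.eq_zero_or_pos N with rfl | hN
  · simp [ktB]
  have hN' : (0:ℝ) < N := by exact_mod_cast hN
  have h1 : Real.log (ktB k N) ≤ Real.log N.factorial + ((k:ℝ) / 2 - 1) * (harmonic N : ℝ) := by
    unfold ktB
    rw [Real.log_prod (fun t _ => by positivity), ← Finset.prod_range_add_one_eq_factorial]
    push_cast
    rw [Real.log_prod (fun t _ => by positivity), harmonic]
    push_cast
    rw [Finset.mul_sum, ← Finset.sum_add_distrib]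
    refine Finset.sum_le_sum fun t _ => ?_
    have h := Real.log_le_sub_one_of_pos (show (0:ℝ) < (t + k / 2) / (t + 1) by positivity)
    rw [Real.log_div (by positivity) (by positivity)] at h
    have e : ((t:ℝ) + k / 2) / (t + 1) - 1 = (k / 2 - 1) * (t + 1 : ℝ)⁻¹ := by field_simp; ring
    rw [e] at h
    linarith
  have h2 := log_fact_le N hN
  have h3 := harmonic_le_one_add_log N
  have h4 := log_add_one_le_harmonic N
  push_cast at h4
  have h5 : Real.log N ≤ Real.log (N + 1) := Real.log_le_log hN' (by linarith)
  have hk1 : (1:ℝ) ≤ k := by exact_mod_cast hk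
  rcases hk.eq_or_lt with h | h
  · subst h; push_cast at *; linarith
  · have hk2 : (2:ℝ) ≤ k := by exact_mod_cast h
    nlinarith

lemma gibbs {ι : Type*} (S : Finset ι) (θ : ι → ℝ) (hθ : ∀ j ∈ S, 0 < θ j) (h1 : ∑ j ∈ S, θ j ≤ 1)
    (N : ι → ℕ) :
    ∑ j ∈ S, (N j : ℝ) * Real.log (θ j) + ((∑ j ∈ S, N j : ℕ) : ℝ) * Real.log ((∑ j ∈ S, N j : ℕ) : ℝ)
      ≤ ∑ j ∈ S, (N j : ℝ) * Real.log (N j) := by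
  set M := ∑ j ∈ S, N j with hM
  have hMc : (M : ℝ) = ∑ j ∈ S, (N j : ℝ) := by rw [hM]; push_cast; rfl
  have h : ∀ j ∈ S, (N j : ℝ) * Real.log (θ j) + N j * Real.log M ≤ N j * Real.log (N j) + (θ j * M - N j) := by
    intro j hj
    rcases Nat.eq_zero_or_pos (N j) with h0 | h0
    · simp [h0]; exact mul_nonneg (hθ j hj).le (by positivity)
    · have hle : N j ≤ M := Finset.single_le_sum (f := N) (fun _ _ => Nat.zero_le _) hj
      have hp : (0:ℝ) < N j := by exact_mod_cast h0
      have hMp : (0:ℝ) < M := by exact_mod_cast lt_of_lt_of_le h0 hle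
      have hθj := hθ j hj
      have := Real.log_le_sub_one_of_pos (show 0 < θ j * M / N j by positivity)
      rw [Real.log_div (by positivity) hp.ne', Real.log_mul hθj.ne' hMp.ne'] at this
      have h2 := mul_le_mul_of_nonneg_left this hp.le
      have h3 : (N j : ℝ) * (θ j * M / N j - 1) = θ j * M - N j := by field_simp
      linarith
  have h2 := Finset.sum_le_sum h
  rw [Finset.sum_add_distrib, Finset.sum_add_distrib, Finset.sum_sub_distrib, ← Finset.sum_mul,
    ← Finset.sum_mul, ← hMc] at h2
  have : (∑ j ∈ S, θ j) * M ≤ 1 * M := by gcongr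
  linarith

lemma kt_row {ι : Type*} (S : Finset ι) (hS : 1 ≤ S.card) (θ : ι → ℝ) (hθ : ∀ j ∈ S, 0 < θ j)
    (h1 : ∑ j ∈ S, θ j ≤ 1) (N : ι → ℕ) (m : ℕ) (hm : ∑ j ∈ S, N j ≤ m) :
    ktB S.card (∑ j ∈ S, N j) * ∏ j ∈ S, θ j ^ N j ≤
      Real.exp (S.card) * ((m:ℝ) + 1) ^ (((S.card:ℝ) - 1) / 2) * ∏ j ∈ S, ktA (N j) := by
  have hθp : 0 < ∏ j ∈ S, θ j ^ N j := Finset.prod_pos fun j hj => pow_pos (hθ j hj) _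
  have hap : 0 < ∏ j ∈ S, ktA (N j) := Finset.prod_pos fun j _ => ktA_pos _
  have hbp := ktB_pos S.card (∑ j ∈ S, N j) hS
  rw [← Real.log_le_log_iff (by positivity) (by positivity), Real.log_mul hbp.ne' hθp.ne',
    Real.log_mul (by positivity) hap.ne', Real.log_mul (by positivity) (by positivity), Real.log_exp,
    Real.log_rpow (by positivity), Real.log_prod (fun j hj => (pow_pos (hθ j hj) _).ne'),
    Real.log_prod (fun j _ => (ktA_pos _).ne')]
  simp_rw [Real.log_pow]
  have hg := gibbs S θ hθ h1 N
  have hb := ktB_log S.card (∑ j ∈ S, N j) hS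
  have ha := Finset.sum_le_sum fun j (_ : j ∈ S) => ktA_log (N j)
  rw [Finset.sum_sub_distrib] at ha
  have hc : ((∑ j ∈ S, N j : ℕ) : ℝ) = ∑ j ∈ S, (N j : ℝ) := by push_cast; rfl
  have hS1 : (1:ℝ) ≤ S.card := by exact_mod_cast hS
  have hmm : Real.log (((∑ j ∈ S, N j : ℕ) : ℝ) + 1) ≤ Real.log (m + 1) :=
    Real.log_le_log (by positivity) (by have : ((∑ j ∈ S, N j : ℕ) : ℝ) ≤ m := by exact_mod_cast hm
                                        linarith)
  have := mul_le_mul_of_nonneg_left hmm (show (0:ℝ) ≤ ((S.card:ℝ) - 1) / 2 by linarith)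
  linarith

noncomputable def pathProb {r : ℕ} (M : Matrix (Fin r) (Fin r) ℝ) (π0 : Fin r → ℝ) (m : ℕ)
    (x : Fin m → Fin r) : ℝ :=
  ∏ k : Fin m,
      if (k : ℕ) = 0 then π0 (x k)
      else M (x ⟨(k : ℕ) - 1, lt_of_le_of_lt (Nat.sub_le _ _) k.isLt⟩) (x k)

lemma pathProb_zero {r : ℕ} (M : Matrix (Fin r) (Fin r) ℝ) (π0 : Fin r → ℝ) (x : Fin 0 → Fin r) :
    pathProb M π0 0 x = 1 := by simp [pathProb]

lemma pathProb_one {r : ℕ} (M : Matrix (Fin r) (Fin r) ℝ) (π0 : Fin r → ℝ) (x : Fin 1 → Fin r) :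
    pathProb M π0 1 x = π0 (x (Fin.last 0)) := by simp [pathProb]

lemma pathProb_succ {r : ℕ} (M : Matrix (Fin r) (Fin r) ℝ) (π0 : Fin r → ℝ) (m : ℕ)
    (x : Fin (m + 2) → Fin r) :
    pathProb M π0 (m + 2) x = pathProb M π0 (m + 1) (Fin.init x) *
      M (Fin.init x (Fin.last m)) (x (Fin.last (m + 1))) := by
  unfold pathProb
  rw [Fin.prod_univ_castSucc]
  congr 1

lemma pathProb_nonneg {r : ℕ} (M : Matrix (Fin r) (Fin r) ℝ) (π0 : Fin r → ℝ)
    (hM : ∀ i j, 0 ≤ M i j) (hπ : ∀ i, 0 ≤ π0 i) (m : ℕ) (x : Fin m → Fin r) :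
    0 ≤ pathProb M π0 m x := by
  refine Finset.prod_nonneg fun k _ => ?_
  split_ifs
  · exact hπ _
  · exact hM _ _

lemma sum_snoc_le {α : Type*} [Fintype α] (m : ℕ) (F : (Fin (m + 1) → α) → ℝ) (G : (Fin m → α) → ℝ)
    (h : ∀ x : Fin m → α, ∑ a, F (Fin.snoc (α := fun _ => α) x a) ≤ G x) : ∑ x, F x ≤ ∑ x, G x := by
  rw [← Equiv.sum_comp (Fin.snocEquiv (fun _ => α)) F, Fintype.sum_prod_type, Finset.sum_comm]
  exact Finset.sum_le_sum fun x _ => h x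

lemma pathProb_sum_le {r : ℕ} (M : Matrix (Fin r) (Fin r) ℝ) (π0 : Fin r → ℝ)
    (hM : ∀ i j, 0 ≤ M i j) (hM1 : ∀ i, ∑ j, M i j = 1) (hπ : ∀ i, 0 ≤ π0 i) (hπ1 : ∑ i, π0 i = 1) (m : ℕ) :
    ∑ x, pathProb M π0 m x ≤ 1 := by
  induction m with
  | zero => simp [pathProb_zero]
  | succ m ih =>
    refine le_trans (sum_snoc_le m _ (fun x => pathProb M π0 m x) fun x => ?_) ih
    rcases m with _ | m
    · simp [pathProb_one, pathProb_zero, hπ1, Fin.snoc]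
    · simp only [pathProb_succ, Fin.init_snoc, Fin.snoc_last]
      rw [← Finset.mul_sum, hM1, mul_one]

/-- transition counts -/
def ktCnt {r : ℕ} : (m : ℕ) → (Fin m → Fin r) → Fin r → Fin r → ℕ
  | 0, _ => fun _ _ => 0
  | 1, _ => fun _ _ => 0
  | (m + 2), x => fun i j => ktCnt (m + 1) (Fin.init x) i j +
      if Fin.init x (Fin.last m) = i ∧ x (Fin.last (m + 1)) = j then 1 else 0

def rowS {r : ℕ} (E : Finset (Fin r × Fin r)) (i : Fin r) : Finset (Fin r) :=
  Finset.univ.filter fun j => (i, j) ∈ E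

noncomputable def ktQ {r : ℕ} (E : Finset (Fin r × Fin r)) : (m : ℕ) → (Fin m → Fin r) → ℝ
  | 0, _ => 1
  | 1, _ => 1 / r
  | (m + 2), x => ktQ E (m + 1) (Fin.init x) *
      if (Fin.init x (Fin.last m), x (Fin.last (m + 1))) ∈ E then
        ((ktCnt (m + 1) (Fin.init x) (Fin.init x (Fin.last m)) (x (Fin.last (m + 1))) : ℝ) + 1 / 2) /
          (((∑ j ∈ rowS E (Fin.init x (Fin.last m)), ktCnt (m + 1) (Fin.init x) (Fin.init x (Fin.last m)) j : ℕ) : ℝ)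
            + (rowS E (Fin.init x (Fin.last m))).card / 2)
      else 0

lemma ktQ_nonneg {r : ℕ} (E : Finset (Fin r × Fin r)) (m : ℕ) (x : Fin m → Fin r) : 0 ≤ ktQ E m x := by
  induction m with
  | zero => simp [ktQ]
  | succ m ih =>
    rcases m with _ | m
    · simp [ktQ]
    · rw [ktQ]
      refine mul_nonneg (ih _) ?_
      split_ifs
      · positivity
      · rfl

lemma ktQ_sum_le {r : ℕ} (E : Finset (Fin r × Fin r)) (m : ℕ) : ∑ x, ktQ E m x ≤ 1 := by
  induction m with
  | zero => simp [ktQ]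
  | succ m ih =>
    refine le_trans (sum_snoc_le m _ (fun x => ktQ E m x) fun x => ?_) ih
    rcases m with _ | m
    · simp only [ktQ, Finset.sum_const, Finset.card_univ, Fintype.card_fin, nsmul_eq_mul]
      rw [mul_one_div]; exact div_self_le_one _
    · simp only [ktQ, Fin.init_snoc, Fin.snoc_last]
      rw [← Finset.mul_sum]
      refine mul_le_of_le_one_right (ktQ_nonneg E _ x) ?_
      rw [← Finset.sum_filter]
      change ∑ j ∈ rowS E (x (Fin.last m)), _ ≤ _
      rw [← Finset.sum_div, Finset.sum_add_distrib]
      refine div_le_one_of_le₀ (le_of_eq ?_) (by positivity)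
      push_cast
      simp
      ring

lemma ktCnt_le {r : ℕ} (m : ℕ) (x : Fin m → Fin r) (i : Fin r) (S : Finset (Fin r)) :
    ∑ j ∈ S, ktCnt m x i j ≤ m := by
  induction m with
  | zero => simp [ktCnt]
  | succ m ih =>
    rcases m with _ | m
    · simp [ktCnt]
    · simp only [ktCnt]
      rw [Finset.sum_add_distrib]
      refine add_le_add (ih _) ?_
      calc _ ≤ ∑ j ∈ S, if x (Fin.last (m + 1)) = j then 1 else 0 := by
            refine Finset.sum_le_sum fun j _ => ?_
            split_ifs <;> simp_all
        _ ≤ 1 := by rw [Finset.sum_ite_eq]; split_ifs <;> simp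

lemma prod_row_update {r : ℕ} (E : Finset (Fin r × Fin r)) (g g' : Fin r → Fin r → ℝ) (i0 j0 : Fin r)
    (h0 : (i0, j0) ∈ E) (c : ℝ)
    (h : ∀ i j, g' i j = g i j * if i0 = i ∧ j0 = j then c else 1) :
    ∏ i, ∏ j ∈ rowS E i, g' i j = (∏ i, ∏ j ∈ rowS E i, g i j) * c := by
  simp_rw [h, Finset.prod_mul_distrib]
  congr 1
  have : ∀ i, (∏ j ∈ rowS E i, if i0 = i ∧ j0 = j then c else 1) = if i0 = i then c else 1 := by
    intro i
    by_cases hi : i0 = i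
    · subst hi
      simp [Finset.prod_ite_eq, rowS, h0]
    · simp [hi]
  simp_rw [this]
  simp

lemma kt_main {r : ℕ} (hr : 1 ≤ r) (E : Finset (Fin r × Fin r)) (M : Matrix (Fin r) (Fin r) ℝ) (π0 : Fin r → ℝ)
    (hM : ∀ i j, 0 ≤ M i j) (hE : ∀ i j, 0 < M i j ↔ (i, j) ∈ E) (hrow : ∀ i, 1 ≤ (rowS E i).card)
    (hπ1 : ∀ i, π0 i ≤ 1) (m : ℕ) (x : Fin (m + 1) → Fin r) :
    pathProb M π0 (m + 1) x * ∏ i, ∏ j ∈ rowS E i, ktA (ktCnt (m + 1) x i j) ≤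
      r * ktQ E (m + 1) x * ((∏ i, ktB (rowS E i).card (∑ j ∈ rowS E i, ktCnt (m + 1) x i j)) *
        ∏ i, ∏ j ∈ rowS E i, M i j ^ (ktCnt (m + 1) x i j)) := by
  induction m with
  | zero =>
    have : (r:ℝ) ≠ 0 := by positivity
    simp [pathProb_one, ktQ, ktCnt, ktA, ktB, this, hπ1]
  | succ m ih =>
    rw [pathProb_succ]
    have ih := ih (Fin.init x)
    set y : Fin (m + 1) → Fin r := Fin.init x with hy
    set i0 := y (Fin.last m) with hi0
    set j0 := x (Fin.last (m + 1)) with hj0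
    have hcnt : ∀ i j, ktCnt (m + 2) x i j = ktCnt (m + 1) y i j + if i0 = i ∧ j0 = j then 1 else 0 := by
      intro i j; rfl
    by_cases h0 : (i0, j0) ∈ E
    · have hQ : ktQ E (m + 2) x = ktQ E (m + 1) y * (((ktCnt (m + 1) y i0 j0 : ℝ) + 1 / 2) /
          (((∑ j ∈ rowS E i0, ktCnt (m + 1) y i0 j : ℕ) : ℝ) + (rowS E i0).card / 2)) := by
        rw [ktQ]; exact congrArg _ (if_pos h0)
      have hA := prod_row_update E (fun i j => ktA (ktCnt (m + 1) y i j)) (fun i j => ktA (ktCnt (m + 2) x i j))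
        i0 j0 h0 ((ktCnt (m + 1) y i0 j0 : ℝ) + 1 / 2) (by
          intro i j
          rw [hcnt]
          split_ifs with h
          · rw [← h.1, ← h.2]; exact Finset.prod_range_succ _ _
          · simp)
      have hP := prod_row_update E (fun i j => M i j ^ (ktCnt (m + 1) y i j)) (fun i j => M i j ^ (ktCnt (m + 2) x i j))
        i0 j0 h0 (M i0 j0) (by
          intro i j
          rw [hcnt]
          split_ifs with h
          · rw [← h.1, ← h.2, pow_succ]
          · simp)
      have hB : ∏ i, ktB (rowS E i).card (∑ j ∈ rowS E i, ktCnt (m + 2) x i j) =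
          (∏ i, ktB (rowS E i).card (∑ j ∈ rowS E i, ktCnt (m + 1) y i j)) *
          (((∑ j ∈ rowS E i0, ktCnt (m + 1) y i0 j : ℕ) : ℝ) + (rowS E i0).card / 2) := by
        have : ∀ i, ktB (rowS E i).card (∑ j ∈ rowS E i, ktCnt (m + 2) x i j) =
            ktB (rowS E i).card (∑ j ∈ rowS E i, ktCnt (m + 1) y i j) *
            if i0 = i then (((∑ j ∈ rowS E i0, ktCnt (m + 1) y i0 j : ℕ) : ℝ) + (rowS E i0).card / 2) else 1 := by
          intro i
          simp_rw [hcnt]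
          rw [Finset.sum_add_distrib]
          split_ifs with h
          · subst h
            have : (∑ j ∈ rowS E i0, if i0 = i0 ∧ j0 = j then 1 else 0) = 1 := by
              simp [rowS, h0]
            rw [this]
            exact Finset.prod_range_succ _ _
          · simp [h]
        simp_rw [this, Finset.prod_mul_distrib]
        simp
      beta_reduce at hA hP
      rw [hA, hP, hB, hQ]
      set a := ((ktCnt (m + 1) y i0 j0 : ℝ) + 1 / 2)
      have hbp : 0 < (((∑ j ∈ rowS E i0, ktCnt (m + 1) y i0 j : ℕ) : ℝ) + (rowS E i0).card / 2) := by
        have := hrow i0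
        positivity
      set b := (((∑ j ∈ rowS E i0, ktCnt (m + 1) y i0 j : ℕ) : ℝ) + (rowS E i0).card / 2)
      have hap : 0 < a := by positivity
      have := mul_le_mul_of_nonneg_right ih (mul_nonneg (hM i0 j0) hap.le)
      refine le_trans (le_of_eq ?_) (this.trans (le_of_eq ?_))
      · ring
      · field_simp
    · have hz : M i0 j0 = 0 := le_antisymm (not_lt.1 (mt (hE i0 j0).1 h0)) (hM _ _)
      rw [hz]
      have hb : 0 ≤ ∏ i, ktB (rowS E i).card (∑ j ∈ rowS E i, ktCnt (m + 2) x i j) :=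
        Finset.prod_nonneg fun i _ => (ktB_pos _ _ (hrow i)).le
      have hp : 0 ≤ ∏ i, ∏ j ∈ rowS E i, M i j ^ (ktCnt (m + 2) x i j) :=
        Finset.prod_nonneg fun i _ => Finset.prod_nonneg fun j _ => pow_nonneg (hM _ _) _
      have hq := ktQ_nonneg E (m + 2) x
      rw [mul_zero, zero_mul]
      positivity

lemma sum_card_rowS {r : ℕ} (E : Finset (Fin r × Fin r)) : ∑ i, (rowS E i).card = E.card := by
  simp only [rowS, Finset.card_filter]
  rw [← Fintype.sum_prod_type (fun z : Fin r × Fin r => if z ∈ E then 1 else 0)]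
  simp

lemma kt_bound {r : ℕ} (hr : 1 ≤ r) (E : Finset (Fin r × Fin r)) (M : Matrix (Fin r) (Fin r) ℝ) (π0 : Fin r → ℝ)
    (hM : ∀ i j, 0 ≤ M i j) (hM1 : ∀ i, ∑ j, M i j = 1) (hE : ∀ i j, 0 < M i j ↔ (i, j) ∈ E)
    (hπ0 : ∀ i, 0 ≤ π0 i) (hπ1 : ∑ i, π0 i = 1) (m : ℕ) (x : Fin m → Fin r) :
    pathProb M π0 m x ≤ (r * Real.exp E.card * ((m:ℝ) + 1) ^ (((E.card:ℝ) - r) / 2)) * ktQ E m x := by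
  have hrow : ∀ i, 1 ≤ (rowS E i).card := by
    intro i
    by_contra hcon
    have h0 : (rowS E i).card = 0 := by omega
    rw [Finset.card_eq_zero] at h0
    have : ∑ j, M i j = 0 := Finset.sum_eq_zero fun j _ => by
      refine le_antisymm (not_lt.1 fun h => ?_) (hM i j)
      have : j ∈ rowS E i := by simp [rowS, (hE i j).1 h]
      simp [h0] at this
    rw [hM1] at this
    exact one_ne_zero this
  have hrE : r ≤ E.card := by
    rw [← sum_card_rowS E]
    calc r = ∑ i : Fin r, 1 := by simp
      _ ≤ _ := Finset.sum_le_sum fun i _ => hrow i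
  have hrE' : (r:ℝ) ≤ E.card := by exact_mod_cast hrE
  have hr' : (1:ℝ) ≤ r := by exact_mod_cast hr
  rcases m with _ | m
  · simp only [pathProb_zero, ktQ, mul_one]
    have : (1:ℝ) ≤ Real.exp E.card := Real.one_le_exp (by positivity)
    simp
    nlinarith
  have hπle : ∀ i, π0 i ≤ 1 := fun i => hπ1 ▸ Finset.single_le_sum (fun j _ => hπ0 j) (Finset.mem_univ i)
  have h1 := kt_main hr E M π0 hM hE hrow hπle m x
  have hap : 0 < ∏ i, ∏ j ∈ rowS E i, ktA (ktCnt (m + 1) x i j) :=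
    Finset.prod_pos fun i _ => Finset.prod_pos fun j _ => ktA_pos _
  have h2 : (∏ i, ktB (rowS E i).card (∑ j ∈ rowS E i, ktCnt (m + 1) x i j)) *
        ∏ i, ∏ j ∈ rowS E i, M i j ^ (ktCnt (m + 1) x i j) ≤
      (Real.exp E.card * (((m + 1 : ℕ):ℝ) + 1) ^ (((E.card:ℝ) - r) / 2)) *
        ∏ i, ∏ j ∈ rowS E i, ktA (ktCnt (m + 1) x i j) := by
    rw [← Finset.prod_mul_distrib]
    have h3 : ∏ i, (ktB (rowS E i).card (∑ j ∈ rowS E i, ktCnt (m + 1) x i j) *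
        ∏ j ∈ rowS E i, M i j ^ (ktCnt (m + 1) x i j)) ≤
        ∏ i, (Real.exp (rowS E i).card * (((m + 1 : ℕ):ℝ) + 1) ^ ((((rowS E i).card:ℝ) - 1) / 2) *
          ∏ j ∈ rowS E i, ktA (ktCnt (m + 1) x i j)) := by
      refine Finset.prod_le_prod (fun i _ => mul_nonneg (ktB_pos _ _ (hrow i)).le
        (Finset.prod_nonneg fun j _ => pow_nonneg (hM _ _) _)) fun i _ => ?_
      refine kt_row (rowS E i) (hrow i) (M i) (fun j hj => (hE i j).2 ?_) ?_ _ _ (ktCnt_le _ _ _ _)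
      · simpa [rowS] using hj
      · rw [← hM1 i]
        exact Finset.sum_le_sum_of_subset_of_nonneg (Finset.subset_univ _) fun j _ _ => hM i j
    refine h3.trans (le_of_eq ?_)
    rw [Finset.prod_mul_distrib, Finset.prod_mul_distrib, ← Real.exp_sum,
      ← Real.rpow_sum_of_pos (by positivity), ← Finset.sum_div, Finset.sum_sub_distrib]
    have : ∑ i, ((rowS E i).card : ℝ) = E.card := by exact_mod_cast sum_card_rowS E
    rw [this]
    simp
  have hq := ktQ_nonneg E (m + 1) x
  have h4 := h1.trans (mul_le_mul_of_nonneg_left h2 (show 0 ≤ (r:ℝ) * ktQ E (m + 1) x by positivity))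
  refine le_of_mul_le_mul_right (h4.trans (le_of_eq ?_)) hap
  ring

lemma measure_split {Ω ι : Type*} [Fintype ι] [MeasurableSpace Ω] (μ : Measure Ω) (g : Ω → ι)
    (hg : ∀ i, MeasurableSet {ω | g ω = i}) (s : Set Ω) :
    μ s = ∑ i, μ ({ω | g ω = i} ∩ s) := by
  have := sum_measure_preimage_singleton (μ := μ.restrict s) Finset.univ (f := g) (fun y _ => hg y)
  simp only [Finset.coe_univ, Set.preimage_univ, Measure.restrict_apply_univ] at this
  rw [← this]
  refine Finset.sum_congr rfl fun i _ => ?_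
  exact (Measure.restrict_apply (hg i))

lemma entropy_bound {n : ℕ} (hn : 0 < n) {A B Ω : Type*} [Fintype A] [Fintype B]
    [MeasurableSpace Ω] (μ : Measure Ω) [IsProbabilityMeasure μ] (prm : Ω → Equiv.Perm (Fin n))
    (X : Ω → Fin n → A) (W : Ω → Fin n → B)
    (hprm : ∀ σ, MeasurableSet {ω | prm ω = σ}) (hX : ∀ x, MeasurableSet {ω | X ω = x})
    (hW : ∀ w, MeasurableSet {ω | W ω = w})
    (J : (Fin n → A) → (Fin n → B) → ℝ≥0∞)
    (hJ : ∀ σ x w, μ {ω | prm ω = σ ∧ X ω = x ∧ W ω = w} = ((n.factorial : ℝ≥0∞))⁻¹ * J x w)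
    (hJs : ∀ (τ : Equiv.Perm (Fin n)) x w, J (x ∘ τ) (w ∘ τ) = J x w)
    (R : (Fin n → B) × (Fin n → A) → ℝ≥0∞) (hR : ∑ b, R b ≤ 1) (K : ℝ) (hK : 0 < K)
    (hb : ∀ (σ : Equiv.Perm (Fin n)) w y, J (y ∘ σ) w ≤ ENNReal.ofReal K ^ n * R (w, y)) :
    Real.log n.factorial / n - Real.log K ≤ shCondEntropy μ
          (fun ω => if hn : 0 < n then ((prm ω ⟨0, hn⟩ : Fin n) : ℕ) else 0)
          (fun ω => (W ω, fun v => X ω ((prm ω).symm v))) := by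
  classical
  have hfac : (0:ℝ) < n.factorial := by exact_mod_cast n.factorial_pos
  set Z : Ω → (Fin n → B) × (Fin n → A) := fun ω => (W ω, fun v => X ω ((prm ω).symm v)) with hZ
  set p : Equiv.Perm (Fin n) → (Fin n → B) × (Fin n → A) → ℝ :=
    fun σ b => (μ ({ω | prm ω = σ} ∩ Z ⁻¹' {b})).toReal with hp
  have hset : ∀ σ b, {ω | prm ω = σ} ∩ Z ⁻¹' {b} = {ω | prm ω = σ ∧ X ω = b.2 ∘ σ ∧ W ω = b.1} := by
    rintro σ ⟨w, y⟩
    ext ω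
    simp only [Set.mem_inter_iff, Set.mem_ofPred_eq, Set.mem_preimage, Set.mem_singleton_iff, hZ, Prod.mk.injEq]
    constructor
    · rintro ⟨h1, h2, h3⟩
      refine ⟨h1, ?_, h2⟩
      funext u
      have := congrFun h3 (σ u)
      simpa [h1] using this
    · rintro ⟨h1, h2, h3⟩
      refine ⟨h1, h3, ?_⟩
      funext v
      rw [h2, h1]; simp
  have hpJ : ∀ σ b, p σ b = (((n.factorial : ℝ≥0∞))⁻¹ * J (b.2 ∘ σ) b.1).toReal := by
    intro σ b
    rw [← hJ, ← hset]
  have hZm : ∀ b, MeasurableSet (Z ⁻¹' {b}) := by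
    intro b
    have : Z ⁻¹' {b} = ⋃ σ, ({ω | prm ω = σ} ∩ Z ⁻¹' {b}) := by ext ω; simp
    rw [this]
    refine MeasurableSet.iUnion fun σ => ?_
    rw [hset]
    exact (hprm σ).inter ((hX _).inter (hW _))
  have htot : ∀ b, pTot p b = (μ (Z ⁻¹' {b})).toReal := by
    intro b
    rw [measure_split μ prm hprm, ENNReal.toReal_sum (fun _ _ => measure_ne_top _ _)]
    rfl
  have hmarg : ∀ u v b, pMarg p u v b = (μ ({ω | prm ω u = v} ∩ Z ⁻¹' {b})).toReal := by
    intro u v b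
    rw [measure_split μ prm hprm, ENNReal.toReal_sum (fun _ _ => measure_ne_top _ _)]
    refine Finset.sum_congr rfl fun σ _ => ?_
    split_ifs with h
    · simp only [hp]
      congr 2
      ext ω
      simp only [Set.mem_inter_iff, Set.mem_ofPred_eq]
      constructor
      · rintro ⟨h1, h2⟩
        exact ⟨h1, by rw [h1]; exact h, h2⟩
      · rintro ⟨h1, _, h2⟩
        exact ⟨h1, h2⟩
    · have : {ω | prm ω = σ} ∩ ({ω | prm ω u = v} ∩ Z ⁻¹' {b}) = ∅ := by
        ext ω
        simp only [Set.mem_inter_iff, Set.mem_ofPred_eq, Set.mem_empty_iff_false, iff_false]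
        rintro ⟨h1, h2, _⟩
        exact h (h1 ▸ h2)
      rw [this]; simp
  have hH : shCondEntropy μ (fun ω => if hn : 0 < n then ((prm ω ⟨0, hn⟩ : Fin n) : ℕ) else 0) Z =
      - ∑ v, ∑ b, pMarg p ⟨0, hn⟩ v b * Real.log (pMarg p ⟨0, hn⟩ v b / pTot p b) := by
    unfold shCondEntropy
    congr 1
    rw [tsum_eq_sum (s := Finset.range n), Finset.sum_range]
    · refine Finset.sum_congr rfl fun v _ => ?_
      rw [tsum_fintype]
      refine Finset.sum_congr rfl fun b _ => ?_
      have : (fun ω => if hn : 0 < n then ((prm ω ⟨0, hn⟩ : Fin n) : ℕ) else 0) ⁻¹' {(v:ℕ)} =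
          {ω | prm ω ⟨0, hn⟩ = v} := by
        ext ω; simp [hn, Fin.ext_iff]
      rw [hmarg, htot, this]
    · intro a ha
      have ha' : n ≤ a := by simpa using ha
      have : (fun ω => if hn : 0 < n then ((prm ω ⟨0, hn⟩ : Fin n) : ℕ) else 0) ⁻¹' {a} = ∅ := by
        ext ω
        simp only [hn, dif_pos, Set.mem_preimage, Set.mem_singleton_iff, Set.mem_empty_iff_false, iff_false]
        have := (prm ω ⟨0, hn⟩).isLt
        omega
      rw [this]; simp
  have hRfin : ∀ b, R b ≠ ∞ := fun b => by
    have : R b ≤ 1 := (Finset.single_le_sum (f := R) (fun _ _ => zero_le) (Finset.mem_univ b)).trans hR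
    exact ne_top_of_le_ne_top ENNReal.one_ne_top this
  have key := finite_entropy p (fun σ b => ENNReal.toReal_nonneg) (by
      have h1 : ∀ σ b, p σ b = (μ ({ω | Z ω = b} ∩ {ω | prm ω = σ})).toReal := by
        intro σ b; rw [Set.inter_comm]; rfl
      have h2 : ∀ σ, ∑ b, p σ b = (μ ({ω | prm ω = σ})).toReal := by
        intro σ
        rw [measure_split μ Z hZm, ENNReal.toReal_sum (fun _ _ => measure_ne_top _ _)]
        exact Finset.sum_congr rfl fun b _ => h1 σ b
      simp_rw [h2]
      have := measure_split μ prm hprm Set.univ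
      simp only [Set.inter_univ, measure_univ] at this
      rw [← ENNReal.toReal_sum (fun _ _ => measure_ne_top _ _), ← this]; simp)
    (fun τ => ⟨Equiv.prodCongr (Equiv.arrowCongr τ.symm (Equiv.refl B)) (Equiv.refl _), by
      rintro σ ⟨w, y⟩
      rw [hpJ, hpJ]
      have := hJs τ (y ∘ σ) w
      congr 2⟩)
    (fun b => (R b).toReal) (fun b => ENNReal.toReal_nonneg)
    (by
      rw [← ENNReal.toReal_sum (fun b _ => hRfin b)]
      exact ENNReal.toReal_le_of_le_ofReal zero_le_one (by simpa using hR))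
    (K ^ n / n.factorial) (by positivity)
    (by
      rintro σ ⟨w, y⟩
      rw [hpJ]
      have h1 : ((n.factorial : ℝ≥0∞))⁻¹ * J (y ∘ σ) w ≤
          ((n.factorial : ℝ≥0∞))⁻¹ * (ENNReal.ofReal K ^ n * R (w, y)) := by gcongr; exact hb σ w y
      have hfin : ((n.factorial : ℝ≥0∞))⁻¹ * (ENNReal.ofReal K ^ n * R (w, y)) ≠ ∞ :=
        ENNReal.mul_ne_top (by simp [Nat.factorial_ne_zero])
          (ENNReal.mul_ne_top (ENNReal.pow_ne_top ENNReal.ofReal_ne_top) (hRfin _))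
      refine (ENNReal.toReal_mono hfin h1).trans (le_of_eq ?_)
      rw [ENNReal.toReal_mul, ENNReal.toReal_mul, ENNReal.toReal_inv, ENNReal.toReal_pow,
        ENNReal.toReal_ofReal hK.le, ENNReal.toReal_natCast]
      field_simp)
    ⟨0, hn⟩
  rw [← hH] at key
  have hn' : (0:ℝ) < n := by exact_mod_cast hn
  rw [Real.log_div (by positivity) hfac.ne', Real.log_pow] at key
  have e : Real.log n.factorial / n - Real.log K = (- (n * Real.log K - Real.log n.factorial)) / n := by
    field_simp; ring
  rw [e, div_le_iff₀ hn']
  linarith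

section intJ
variable {Θ A B : Type*} [MeasurableSpace Θ] [Fintype A] [Fintype B]

noncomputable def intNu (μP : Measure Θ) (n : ℕ) (g : Θ → A → ℝ≥0∞) (x : Fin n → A) : ℝ≥0∞ :=
  ∫⁻ p, ∏ u, g (p u) (x u) ∂(Measure.pi fun _ : Fin n => μP)

noncomputable def intJ (μP : Measure Θ) (n : ℕ) (g : Θ → A → ℝ≥0∞) (h : Θ → B → ℝ≥0∞)
    (x : Fin n → A) (w : Fin n → B) : ℝ≥0∞ :=
  ∫⁻ p, (∏ u, g (p u) (x u)) * ∏ u, h (p u) (w u) ∂(Measure.pi fun _ : Fin n => μP)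

lemma lintegral_pi_perm (μP : Measure Θ) [IsProbabilityMeasure μP] (n : ℕ) (F : (Fin n → Θ) → ℝ≥0∞)
    (τ : Equiv.Perm (Fin n)) :
    ∫⁻ p, F (p ∘ τ) ∂(Measure.pi fun _ : Fin n => μP) = ∫⁻ p, F p ∂(Measure.pi fun _ : Fin n => μP) := by
  have h := measurePreserving_piCongrLeft (α := fun _ : Fin n => Θ) (fun _ : Fin n => μP) τ.symm
  have h2 := h.lintegral_comp_emb (MeasurableEquiv.measurableEmbedding _) F
  rw [← h2]
  refine lintegral_congr fun p => ?_
  congr 1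
  funext u
  have := Equiv.piCongrLeft_apply_apply (fun _ : Fin n => Θ) τ.symm p (τ u)
  rw [Equiv.symm_apply_apply] at this
  exact this.symm

lemma intNu_perm (μP : Measure Θ) [IsProbabilityMeasure μP] (n : ℕ) (g : Θ → A → ℝ≥0∞) (x : Fin n → A)
    (τ : Equiv.Perm (Fin n)) : intNu μP n g (x ∘ τ) = intNu μP n g x := by
  unfold intNu
  rw [← lintegral_pi_perm μP n (fun p => ∏ u, g (p u) ((x ∘ τ) u)) τ]
  refine lintegral_congr fun p => ?_
  exact Equiv.prod_comp τ (fun u => g (p u) (x u))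

lemma intJ_perm (μP : Measure Θ) [IsProbabilityMeasure μP] (n : ℕ) (g : Θ → A → ℝ≥0∞) (h : Θ → B → ℝ≥0∞)
    (x : Fin n → A) (w : Fin n → B)
    (τ : Equiv.Perm (Fin n)) : intJ μP n g h (x ∘ τ) (w ∘ τ) = intJ μP n g h x w := by
  unfold intJ
  rw [← lintegral_pi_perm μP n (fun p => (∏ u, g (p u) ((x ∘ τ) u)) * ∏ u, h (p u) ((w ∘ τ) u)) τ]
  refine lintegral_congr fun p => ?_
  congr 1
  · exact Equiv.prod_comp τ (fun u => g (p u) (x u))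
  · exact Equiv.prod_comp τ (fun u => h (p u) (w u))

lemma intJ_swap (μP : Measure Θ) (n : ℕ) (g : Θ → A → ℝ≥0∞) (h : Θ → B → ℝ≥0∞)
    (x : Fin n → A) (w : Fin n → B) : intJ μP n g h x w = intJ μP n h g w x := by
  unfold intJ
  simp_rw [mul_comm]

lemma sum_lintegral_le {Ω ι : Type*} [MeasurableSpace Ω] (μ : Measure Ω) (s : Finset ι) (F : ι → Ω → ℝ≥0∞) :
    ∑ i ∈ s, ∫⁻ ω, F i ω ∂μ ≤ ∫⁻ ω, ∑ i ∈ s, F i ω ∂μ := by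
  classical
  induction s using Finset.induction_on with
  | empty => simp
  | insert a s ha ih =>
    simp_rw [Finset.sum_insert ha]
    exact (by gcongr : _ ≤ _).trans (le_lintegral_add _ _)

lemma ae_pi_all (μP : Measure Θ) [IsProbabilityMeasure μP] (n : ℕ) (S : Θ → Prop) (hS : ∀ᵐ θ ∂μP, S θ) :
    ∀ᵐ p ∂(Measure.pi fun _ : Fin n => μP), ∀ u, S (p u) := by
  rw [ae_all_iff]
  intro u
  exact (Measure.quasiMeasurePreserving_eval (fun _ : Fin n => μP) u).ae hS

lemma intNu_sum (μP : Measure Θ) [IsProbabilityMeasure μP] (n : ℕ) (g : Θ → A → ℝ≥0∞)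
    (hg : ∀ᵐ θ ∂μP, ∑ a, g θ a ≤ 1) : ∑ x, intNu μP n g x ≤ 1 := by
  refine (sum_lintegral_le _ _ _).trans ?_
  calc _ ≤ ∫⁻ p, 1 ∂(Measure.pi fun _ : Fin n => μP) := by
        refine lintegral_mono_ae ?_
        filter_upwards [ae_pi_all μP n _ hg] with p hp
        rw [← Fintype.prod_sum]
        exact Finset.prod_le_one' fun u _ => hp u
    _ = 1 := by simp

lemma intJ_le (μP : Measure Θ) [IsProbabilityMeasure μP] (n : ℕ) (g : Θ → A → ℝ≥0∞) (h : Θ → B → ℝ≥0∞)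
    (K : ℝ≥0∞) (hK : K ≠ ∞) (Q : A → ℝ≥0∞) (hQ : ∀ a, Q a ≠ ∞)
    (hg : ∀ᵐ θ ∂μP, ∀ a, g θ a ≤ K * Q a) (x : Fin n → A) (w : Fin n → B) :
    intJ μP n g h x w ≤ K ^ n * ((∏ u, Q (x u)) * intNu μP n h w) := by
  unfold intJ intNu
  rw [← lintegral_const_mul' _ _ (ENNReal.prod_ne_top fun u _ => hQ _), ← lintegral_const_mul' _ _ (ENNReal.pow_ne_top hK)]
  refine lintegral_mono_ae ?_
  filter_upwards [ae_pi_all μP n _ hg] with p hp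
  rw [← mul_assoc]
  gcongr
  calc _ ≤ ∏ u, (K * Q (x u)) := Finset.prod_le_prod' fun u _ => hp u (x u)
    _ = _ := by rw [Finset.prod_mul_distrib]; simp

lemma exists_R (μP : Measure Θ) [IsProbabilityMeasure μP] (n : ℕ) (g : Θ → A → ℝ≥0∞) (h : Θ → B → ℝ≥0∞)
    (hg1 : ∀ᵐ θ ∂μP, ∑ a, g θ a ≤ 1) (hh1 : ∀ᵐ θ ∂μP, ∑ a, h θ a ≤ 1)
    (K : ℝ≥0∞) (hK : K ≠ ∞)
    (hc : (∃ Q : A → ℝ≥0∞, ∑ a, Q a ≤ 1 ∧ ∀ᵐ θ ∂μP, ∀ a, g θ a ≤ K * Q a) ∨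
      (∃ Q : B → ℝ≥0∞, ∑ a, Q a ≤ 1 ∧ ∀ᵐ θ ∂μP, ∀ a, h θ a ≤ K * Q a)) :
    ∃ R : (Fin n → B) × (Fin n → A) → ℝ≥0∞, ∑ b, R b ≤ 1 ∧
      ∀ (σ : Equiv.Perm (Fin n)) w y, intJ μP n g h (y ∘ σ) w ≤ K ^ n * R (w, y) := by
  rcases hc with ⟨Q, hQ, hle⟩ | ⟨Q, hQ, hle⟩
  · have hQf : ∀ a, Q a ≠ ∞ := fun a => ne_top_of_le_ne_top ENNReal.one_ne_top
      ((Finset.single_le_sum (f := Q) (fun _ _ => zero_le) (Finset.mem_univ a)).trans hQ)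
    refine ⟨fun b => (∏ u, Q (b.2 u)) * intNu μP n h b.1, ?_, fun σ w y => ?_⟩
    · rw [Fintype.sum_prod_type]
      simp_rw [← Finset.sum_mul]
      rw [← Finset.mul_sum, ← Fintype.prod_sum]
      exact mul_le_one' (Finset.prod_le_one' fun u _ => hQ) (intNu_sum μP n h hh1)
    · refine (intJ_le μP n g h K hK Q hQf hle _ _).trans (le_of_eq ?_)
      congr 2
      exact Equiv.prod_comp σ (fun u => Q (y u))
  · have hQf : ∀ a, Q a ≠ ∞ := fun a => ne_top_of_le_ne_top ENNReal.one_ne_top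
      ((Finset.single_le_sum (f := Q) (fun _ _ => zero_le) (Finset.mem_univ a)).trans hQ)
    refine ⟨fun b => (∏ u, Q (b.1 u)) * intNu μP n g b.2, ?_, fun σ w y => ?_⟩
    · rw [Fintype.sum_prod_type]
      simp_rw [← Finset.mul_sum]
      rw [← Finset.sum_mul, ← Fintype.prod_sum]
      exact mul_le_one' (Finset.prod_le_one' fun u _ => hQ) (intNu_sum μP n g hg1)
    · rw [intJ_swap]
      refine (intJ_le μP n h g K hK Q hQf hle _ _).trans (le_of_eq ?_)
      rw [intNu_perm]

end intJ

lemma pathLaw_singleton {r : ℕ} (M : Matrix (Fin r) (Fin r) ℝ) (π0 : Fin r → ℝ) (m : ℕ)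
    (x : Fin m → Fin r) : pathLaw M π0 m {x} = ENNReal.ofReal (pathProb M π0 m x) := by
  classical
  unfold pathLaw
  rw [Measure.finsetSum_apply]
  rw [Finset.sum_eq_single x]
  · simp [pathProb]
  · intro y _ hy
    simp [hy]
  · simp

lemma pathLaw_finite {r : ℕ} (M : Matrix (Fin r) (Fin r) ℝ) (π0 : Fin r → ℝ) (m : ℕ) :
    IsFiniteMeasure (pathLaw M π0 m) := by
  constructor
  unfold pathLaw
  rw [Measure.finsetSum_apply, ENNReal.sum_lt_top]
  intro x _
  simp

lemma markovLaw_apply (n m l r d : ℕ) (T : (Fin d → ℝ) → Matrix (Fin r) (Fin r) ℝ)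
    (π0 : (Fin d → ℝ) → Fin r → ℝ) (μP : Measure (Fin d → ℝ)) (h0 : markovLaw n m l r d T π0 μP ≠ 0)
    (x : Fin n → Fin m → Fin r) (w : Fin n → Fin l → Fin r) :
    markovLaw n m l r d T π0 μP (Set.univ ×ˢ ({x} ×ˢ {w})) =
      intJ μP n (fun θ a => ENNReal.ofReal (pathProb (T θ) (π0 θ) m a))
        (fun θ a => ENNReal.ofReal (pathProb (T θ) (π0 θ) l a)) x w := by
  have hfin := fun (θ : Fin d → ℝ) (m : ℕ) => pathLaw_finite (T θ) (π0 θ) m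
  unfold markovLaw at h0 ⊢
  rw [Measure.bind_apply]
  · unfold intJ
    refine lintegral_congr fun p => ?_
    rw [Measure.prod_prod, Measure.prod_prod, measure_univ, one_mul, ← Set.univ_pi_singleton x,
      ← Set.univ_pi_singleton w, Measure.pi_pi, Measure.pi_pi]
    simp_rw [pathLaw_singleton]
  · exact MeasurableSet.univ.prod ((measurableSet_singleton x).prod (measurableSet_singleton w))
  · by_contra hcon
    apply h0
    unfold Measure.bind
    rw [Measure.map_of_not_aemeasurable hcon, Measure.join_zero]

lemma asymp (c α C d : ℝ) (hc : 0 < c) (hα : 0 < α) (hd : 0 < d) (hC : 0 < C) (s : ℕ → ℕ)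
    (hs : ∀ n : ℕ, (s n : ℝ) ≤ c * (n : ℝ) ^ (2 / d - α)) :
    ∃ ε : ℝ, 0 < ε ∧ ∃ C' : ℝ, ∀ n : ℕ, 0 < n →
      ε * Real.log n - C' ≤ Real.log n.factorial / n - Real.log (C * ((s n : ℝ) + 1) ^ (d / 2)) := by
  set e := max (2 / d - α) 0 with he
  have h1 : d / 2 * e < 1 := by
    rcases max_cases (2 / d - α) 0 with h | h
    · rw [he, h.1]
      have : d / 2 * (2 / d - α) = 1 - d / 2 * α := by field_simp
      rw [this]
      have : 0 < d / 2 * α := by positivity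
      linarith
    · rw [he, h.1]; simp
  refine ⟨1 - d / 2 * e, by linarith, 1 + Real.log C + d / 2 * Real.log (c + 1), fun n hn => ?_⟩
  have hn1 : (1:ℝ) ≤ n := by exact_mod_cast hn
  have hn0 : (0:ℝ) < n := by linarith
  have h2 : (s n : ℝ) + 1 ≤ (c + 1) * (n:ℝ) ^ e := by
    have ha : (n:ℝ) ^ (2 / d - α) ≤ (n:ℝ) ^ e := Real.rpow_le_rpow_of_exponent_le hn1 (le_max_left _ _)
    have hb : 1 ≤ (n:ℝ) ^ e := Real.one_le_rpow hn1 (le_max_right _ _)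
    have := hs n
    nlinarith
  have h3 : Real.log ((s n : ℝ) + 1) ≤ Real.log (c + 1) + e * Real.log n := by
    have := Real.log_le_log (by positivity) h2
    rwa [Real.log_mul (by positivity) (by positivity), Real.log_rpow hn0] at this
  have h4 : Real.log n - 1 ≤ Real.log n.factorial / n := by
    have h := Real.pow_div_factorial_le_exp n hn0.le n
    have hf : (0:ℝ) < n.factorial := by exact_mod_cast n.factorial_pos
    have h' := Real.log_le_log (by positivity) h
    rw [Real.log_div (by positivity) hf.ne', Real.log_pow, Real.log_exp] at h'
    rw [le_div_iff₀ hn0]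
    linarith
  rw [Real.log_mul hC.ne' (by positivity), Real.log_rpow (by positivity)]
  have h5 := mul_le_mul_of_nonneg_left h3 (show 0 ≤ d / 2 by positivity)
  linarith

/-- **`r`-state Markov chain model, perfect anonymity.**  All users share a common
irreducible aperiodic Markov chain structure on `{0, …, r-1}` with edge set `E`; each user
has its own transition matrix, parameterized by `|E| - r` free transition probabilities
drawn from a bounded density on the simplex region.  If at least one of the trace lengths
`m n`, `l n` is at most `c * n ^ (2/(|E|-r) - α)` for some `c, α > 0`, then
`H(Π(1) | W, Y) → ∞` as `n → ∞`, where `Y` is the anonymized version of `X`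
(`Y_{Π(u)} = X_u`, i.e. `Y v = X (Π⁻¹ v)`) and `Π` is a uniformly random permutation
independent of the data. -/
theorem markov_perfect_anonymity
    (r : ℕ) (hr : 2 ≤ r)
    (E : Finset (Fin r × Fin r)) (hrE : r < E.card)
    (d : ℕ) (hd : d = E.card - r)
    -- the parameterization of the transition matrices by the free transition probabilities:
    (T : (Fin d → ℝ) → Matrix (Fin r) (Fin r) ℝ)
    (hstoch : ∀ p ∈ simplexRegion d, (∀ i j, 0 ≤ T p i j) ∧ ∀ i, ∑ j, T p i j = 1)
    (hsupp : ∀ p ∈ simplexRegion d, ∀ i j, 0 < T p i j ↔ (i, j) ∈ E)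
    -- irreducibility and aperiodicity (primitivity) of the common chain structure:
    (hprim : ∀ p ∈ simplexRegion d, ∃ k : ℕ, 0 < k ∧ ∀ i j, 0 < (T p ^ k) i j)
    (hTinj : Set.InjOn T (simplexRegion d))
    -- the (stationary) initial distribution of each chain:
    (π0 : (Fin d → ℝ) → Fin r → ℝ)
    (hπ0 : ∀ p ∈ simplexRegion d,
      (∀ i, 0 ≤ π0 p i) ∧ (∑ i, π0 p i = 1) ∧ ∀ j, ∑ i, π0 p i * T p i j = π0 p j)
    (f : (Fin d → ℝ) → ℝ) (δ₁ δ₂ : ℝ) (hδ₁ : 0 < δ₁)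
    (μP : Measure (Fin d → ℝ)) [IsProbabilityMeasure μP]
    (hμP : μP = volume.withDensity fun x => ENNReal.ofReal (f x))
    (hf0 : ∀ x ∉ simplexRegion d, f x = 0)
    (hf : ∀ x ∈ simplexRegion d, δ₁ < f x ∧ f x < δ₂)
    (m l : ℕ → ℕ) (c α : ℝ) (hc : 0 < c) (hα : 0 < α)
    (hml : (∀ n : ℕ, (m n : ℝ) ≤ c * (n : ℝ) ^ (2 / ((E.card : ℝ) - r) - α)) ∨
           (∀ n : ℕ, (l n : ℝ) ≤ c * (n : ℝ) ^ (2 / ((E.card : ℝ) - r) - α)))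
    (Ω : ℕ → Type) (mΩ : ∀ n, MeasurableSpace (Ω n))
    (μ : ∀ n, Measure (Ω n)) (hμ : ∀ n, IsProbabilityMeasure (μ n))
    (P : ∀ n, Ω n → Fin n → Fin d → ℝ)
    (X : ∀ n, Ω n → Fin n → Fin (m n) → Fin r)
    (W : ∀ n, Ω n → Fin n → Fin (l n) → Fin r)
    (prm : ∀ n, Ω n → Equiv.Perm (Fin n))
    (hP : ∀ n, Measurable (P n)) (hX : ∀ n, Measurable (X n))
    (hW : ∀ n, Measurable (W n))
    (hprm : ∀ n (σ : Equiv.Perm (Fin n)), MeasurableSet {ω | prm n ω = σ})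
    -- `Π` is uniform on the `n!` permutations, independent of `(P, X, W)`, and
    -- `(P, X, W)` has the Markov chain model law described above:
    (hjoint : ∀ n (σ : Equiv.Perm (Fin n))
        (s : Set ((Fin n → Fin d → ℝ) ×
          (Fin n → Fin (m n) → Fin r) × (Fin n → Fin (l n) → Fin r))),
        MeasurableSet s →
        μ n {ω | prm n ω = σ ∧ (P n ω, X n ω, W n ω) ∈ s} =
          ((n.factorial : ℝ≥0∞))⁻¹ * markovLaw n (m n) (l n) r d T π0 μP s) :
    Tendsto (fun n =>
        shCondEntropy (μ n)
          (fun ω => if hn : 0 < n then ((prm n ω ⟨0, hn⟩ : Fin n) : ℕ) else 0)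
          (fun ω => (W n ω, fun v => X n ω ((prm n ω).symm v))))
      atTop atTop := by
  have hr1 : 1 ≤ r := by omega
  have hd' : (E.card : ℝ) - r = d := by
    rw [hd, Nat.cast_sub hrE.le]
  have hd0 : (0:ℝ) < (E.card : ℝ) - r := by
    have : (r:ℝ) < E.card := by exact_mod_cast hrE
    linarith
  have hr0 : (0:ℝ) < r := by exact_mod_cast hr1
  have hC : (0:ℝ) < r * Real.exp E.card := by positivity
  -- almost every parameter lies in the region
  have hSm : MeasurableSet (simplexRegion d) := by
    have h1 : IsOpen (simplexRegion d) := by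
      have e : simplexRegion d = (⋂ i, {x : Fin d → ℝ | 0 < x i}) ∩ {x | ∑ i, x i < 1} := by
        ext x; simp [simplexRegion]
      rw [e]
      refine (isOpen_iInter_of_finite fun i => ?_).inter ?_
      · exact isOpen_lt continuous_const (continuous_apply i)
      · exact isOpen_lt (by fun_prop) continuous_const
    exact h1.measurableSet
  have hae : ∀ᵐ θ ∂μP, θ ∈ simplexRegion d := by
    rw [ae_iff]
    change μP (simplexRegion d)ᶜ = 0
    rw [hμP, withDensity_apply _ hSm.compl, setLIntegral_congr_fun (g := fun _ => 0) hSm.compl]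
    · simp
    · intro x hx
      simp [hf0 x hx]
  have hsum1 : ∀ k : ℕ, ∀ᵐ θ ∂μP, ∑ a, ENNReal.ofReal (pathProb (T θ) (π0 θ) k a) ≤ 1 := by
    intro k
    filter_upwards [hae] with θ hθ
    rw [← ENNReal.ofReal_sum_of_nonneg (fun a _ =>
      pathProb_nonneg _ _ (hstoch θ hθ).1 (hπ0 θ hθ).1 k a)]
    exact ENNReal.ofReal_le_one.2 (pathProb_sum_le _ _ (hstoch θ hθ).1 (hstoch θ hθ).2
      (hπ0 θ hθ).1 (hπ0 θ hθ).2.1 k)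
  have hQ : ∀ k : ℕ, ∃ Q : (Fin k → Fin r) → ℝ≥0∞, ∑ a, Q a ≤ 1 ∧ ∀ᵐ θ ∂μP, ∀ a,
      ENNReal.ofReal (pathProb (T θ) (π0 θ) k a) ≤
        ENNReal.ofReal (r * Real.exp E.card * ((k:ℝ) + 1) ^ (((E.card:ℝ) - r) / 2)) * Q a := by
    intro k
    refine ⟨fun a => ENNReal.ofReal (ktQ E k a), ?_, ?_⟩
    · rw [← ENNReal.ofReal_sum_of_nonneg (fun a _ => ktQ_nonneg E k a)]
      exact ENNReal.ofReal_le_one.2 (ktQ_sum_le E k)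
    · filter_upwards [hae] with θ hθ a
      rw [← ENNReal.ofReal_mul (by positivity)]
      exact ENNReal.ofReal_le_ofReal (kt_bound hr1 E _ _ (hstoch θ hθ).1 (hstoch θ hθ).2
        (hsupp θ hθ) (hπ0 θ hθ).1 (hπ0 θ hθ).2.1 k a)
  obtain ⟨s, hs, hcase⟩ : ∃ s : ℕ → ℕ, (∀ n : ℕ, (s n : ℝ) ≤ c * (n : ℝ) ^ (2 / ((E.card : ℝ) - r) - α)) ∧
      (s = m ∨ s = l) := by
    rcases hml with h | h
    · exact ⟨m, h, Or.inl rfl⟩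
    · exact ⟨l, h, Or.inr rfl⟩
  obtain ⟨ε, hε, C', hC'⟩ := asymp c α (r * Real.exp E.card) ((E.card : ℝ) - r) hc hα hd0 hC s hs
  have hlim : Tendsto (fun n : ℕ => ε * Real.log n - C') atTop atTop := by
    refine tendsto_atTop_add_const_right _ (-C') ?_
    exact (Real.tendsto_log_atTop.comp tendsto_natCast_atTop_atTop).const_mul_atTop hε
  refine tendsto_atTop_mono' _ ?_ hlim
  filter_upwards [eventually_gt_atTop 0] with n hn
  refine (hC' n hn).trans ?_
  have := hμ n
  have hne : markovLaw n (m n) (l n) r d T π0 μP ≠ 0 := by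
    intro h0
    have h1 := measure_split (μ n) (prm n) (hprm n) Set.univ
    have h2 : ∀ σ, μ n ({ω | prm n ω = σ} ∩ Set.univ) = 0 := by
      intro σ
      have := hjoint n σ Set.univ MeasurableSet.univ
      rw [h0] at this
      simpa using this
    rw [Finset.sum_eq_zero fun σ _ => h2 σ, measure_univ] at h1
    exact one_ne_zero h1
  obtain ⟨R, hR, hRb⟩ := exists_R μP n (fun θ a => ENNReal.ofReal (pathProb (T θ) (π0 θ) (m n) a))
    (fun θ a => ENNReal.ofReal (pathProb (T θ) (π0 θ) (l n) a)) (hsum1 _) (hsum1 _)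
    (ENNReal.ofReal (r * Real.exp E.card * ((s n:ℝ) + 1) ^ (((E.card:ℝ) - r) / 2))) ENNReal.ofReal_ne_top
    (by
      rcases hcase with rfl | rfl
      · exact Or.inl (hQ _)
      · exact Or.inr (hQ _))
  refine entropy_bound hn (μ n) (prm n) (X n) (W n) (hprm n)
    (fun x => hX n (measurableSet_singleton x)) (fun w => hW n (measurableSet_singleton w))
    _ (fun σ x w => ?_) (fun τ x w => intJ_perm μP n _ _ x w τ) R hR _ (by positivity) hRb
  rw [← markovLaw_apply n (m n) (l n) r d T π0 μP hne x w, ← hjoint n σ _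
    (MeasurableSet.univ.prod ((measurableSet_singleton x).prod (measurableSet_singleton w)))]
  congr 1
  ext ω
  simp
end

section
/- In the two-state i.i.d. model with l(n) = ⌈c'·n^{2+α}⌉ for some constants c' > 0 and α > 0, and with Δ_n = n^{−(1+α/4)}, the training-trace empirical means W̄_u = (W_u(1)+⋯+W_u(l))/l satisfy P(⋃_{u=2}^n {|W̄_u − W̄_1| ≤ 2Δ_n}) → 0 as n → ∞. -/
open MeasureTheory ProbabilityTheory Filter
open scoped ENNReal NNReal

/-- Bernoulli measure on `Bool` with success probability `p`. -/
noncomputable def bern (p : ℝ) : Measure Bool :=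
  ENNReal.ofReal p • Measure.dirac true + ENNReal.ofReal (1 - p) • Measure.dirac false

/-- Joint law of (parameters, training traces) in the two-state i.i.d. model: the
parameters `p u` are i.i.d. with law `μP`, and conditionally on the parameters the `n`
training traces (of length `l`) consist of i.i.d. `Bernoulli (p u)` samples, mutually
independent across users. -/
noncomputable def twoStateTrainLaw (n l : ℕ) (μP : Measure ℝ) :
    Measure ((Fin n → ℝ) × (Fin n → Fin l → Bool)) :=
  (Measure.pi fun _ : Fin n => μP).bind fun p =>
    (Measure.dirac p).prod
      (Measure.pi fun u : Fin n => Measure.pi fun _ : Fin l => bern (p u))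

/-- Empirical mean of a Boolean sample. -/
noncomputable def empMean {l : ℕ} (w : Fin l → Bool) : ℝ :=
  (∑ k : Fin l, if w k then (1 : ℝ) else 0) / l

lemma bern_isProb {p : ℝ} (hp : p ∈ Set.Ioo (0 : ℝ) 1) : IsProbabilityMeasure (bern p) := by
  constructor
  simp only [bern, Measure.add_apply, Measure.smul_apply, measure_univ, smul_eq_mul, mul_one]
  rw [← ENNReal.ofReal_add hp.1.le (by linarith [hp.2])]
  simp

lemma bern_integral {p : ℝ} (hp : p ∈ Set.Ioo (0 : ℝ) 1) :
    ∫ b, (if b then (1 : ℝ) else 0) ∂(bern p) = p := by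
  unfold bern
  rw [integral_add_measure, integral_smul_measure, integral_smul_measure]
  · simp [ENNReal.toReal_ofReal hp.1.le]
  · exact (integrable_dirac (by simp)).smul_measure (by simp)
  · exact (integrable_dirac (by simp)).smul_measure (by simp)

lemma hoeff {l : ℕ} (hl : 0 < l) {p : ℝ} (hp : p ∈ Set.Ioo (0 : ℝ) 1) {ε : ℝ} (hε : 0 ≤ ε) :
    (Measure.pi fun _ : Fin l => bern p) {w | ε ≤ |empMean w - p|} ≤
      ENNReal.ofReal (2 * Real.exp (-2 * l * ε ^ 2)) := by
  have := bern_isProb hp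
  have hl' : (0 : ℝ) < l := by exact_mod_cast hl
  set ν := (Measure.pi fun _ : Fin l => bern p) with hν
  let g : Bool → ℝ := fun b => (if b then (1 : ℝ) else 0) - p
  have hg : HasSubgaussianMGF g ((‖(1 : ℝ) - 0‖₊ / 2) ^ 2) (bern p) := by
    have := hasSubgaussianMGF_of_mem_Icc (μ := bern p) (a := 0) (b := 1)
      (X := fun b : Bool => if b then (1 : ℝ) else 0) (measurable_of_finite _).aemeasurable
      (Eventually.of_forall fun b => by cases b <;> simp)
    rwa [bern_integral hp] at this
  have hgi : ∀ i : Fin l, HasSubgaussianMGF (fun w : Fin l → Bool => g (w i))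
      ((‖(1 : ℝ) - 0‖₊ / 2) ^ 2) ν := by
    intro i
    have hmp := measurePreserving_eval (fun _ : Fin l => bern p) i
    have h2 : HasSubgaussianMGF g ((‖(1 : ℝ) - 0‖₊ / 2) ^ 2) (ν.map (Function.eval i)) := by
      rw [hν, hmp.map_eq]; exact hg
    exact h2.of_map hmp.measurable.aemeasurable
  have hind : iIndepFun (fun (i : Fin l) (w : Fin l → Bool) => g (w i)) ν :=
    iIndepFun_pi (fun i => (measurable_of_finite g).aemeasurable)
  have hind2 : iIndepFun (fun (i : Fin l) (w : Fin l → Bool) => -g (w i)) ν :=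
    iIndepFun_pi (X := fun _ b => - g b) (fun i => (measurable_of_finite _).aemeasurable)
  have h1 := HasSubgaussianMGF.measure_sum_ge_le_of_iIndepFun hind (s := Finset.univ)
    (fun i _ => hgi i) (ε := l * ε) (by positivity)
  have h2 := HasSubgaussianMGF.measure_sum_ge_le_of_iIndepFun hind2 (s := Finset.univ)
    (fun i _ => (hgi i).neg) (ε := l * ε) (by positivity)
  have he : -(l * ε) ^ 2 / (2 * ((∑ _i : Fin l, (‖(1 : ℝ) - 0‖₊ / 2) ^ 2 : ℝ≥0) : ℝ))
      = -2 * l * ε ^ 2 := by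
    simp
    field_simp
  push_cast at he h1 h2
  rw [he] at h1 h2
  have hsub : {w : Fin l → Bool | ε ≤ |empMean w - p|} ⊆
      {w | l * ε ≤ ∑ i, g (w i)} ∪ {w | l * ε ≤ ∑ i, -g (w i)} := by
    intro w hw
    have hs : ∑ i, g (w i) = l * (empMean w - p) := by
      simp only [g, empMean, Finset.sum_sub_distrib]
      simp
      field_simp
    simp only [Set.mem_ofPred_eq, Set.mem_union, Finset.sum_neg_distrib, hs] at hw ⊢
    rcases le_abs.1 hw with h | h
    · left; gcongr
    · right; rw [← mul_neg]; gcongr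
  have h3 : ν.real {w : Fin l → Bool | ε ≤ |empMean w - p|} ≤ 2 * Real.exp (-2 * l * ε ^ 2) := by
    refine (measureReal_mono hsub).trans ((measureReal_union_le _ _).trans ?_)
    linarith
  rw [← ofReal_measureReal]
  exact ENNReal.ofReal_le_ofReal h3

lemma muP_Icc_le (f : ℝ → ℝ) (δ₁ δ₂ : ℝ) (hδ₁ : 0 < δ₁)
    (hf0 : ∀ x ∉ Set.Ioo (0 : ℝ) 1, f x = 0)
    (hf : ∀ x ∈ Set.Ioo (0 : ℝ) 1, δ₁ < f x ∧ f x < δ₂) (y r : ℝ) :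
    (volume.withDensity fun x => ENNReal.ofReal (f x)) {x | |x - y| ≤ r} ≤
      ENNReal.ofReal (2 * r * δ₂) := by
  have hδ : 0 ≤ δ₂ := by
    have := hf (1/2) (by norm_num)
    linarith
  have hset : {x | |x - y| ≤ r} = Set.Icc (y - r) (y + r) := by
    ext x
    simp only [Set.mem_ofPred_eq, Set.mem_Icc, abs_le]
    constructor <;> rintro ⟨h1, h2⟩ <;> constructor <;> linarith
  rw [hset, withDensity_apply _ measurableSet_Icc]
  calc ∫⁻ x in Set.Icc (y - r) (y + r), ENNReal.ofReal (f x)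
      ≤ ∫⁻ x in Set.Icc (y - r) (y + r), ENNReal.ofReal δ₂ := by
        refine lintegral_mono fun x => ENNReal.ofReal_le_ofReal ?_
        by_cases hx : x ∈ Set.Ioo (0 : ℝ) 1
        · exact (hf x hx).2.le
        · rw [hf0 x hx]; exact hδ
    _ = ENNReal.ofReal (2 * r * δ₂) := by
        rw [setLIntegral_const, Real.volume_Icc, ← ENNReal.ofReal_mul hδ]
        congr 1; ring

lemma muP_ae (f : ℝ → ℝ) (hf0 : ∀ x ∉ Set.Ioo (0 : ℝ) 1, f x = 0) :
    ∀ᵐ x ∂(volume.withDensity fun x => ENNReal.ofReal (f x)), x ∈ Set.Ioo (0 : ℝ) 1 := by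
  rw [ae_iff]
  have : {x | x ∉ Set.Ioo (0 : ℝ) 1} = (Set.Ioo (0 : ℝ) 1)ᶜ := rfl
  rw [this, withDensity_apply _ measurableSet_Ioo.compl,
    setLIntegral_congr_fun (g := fun _ => 0) measurableSet_Ioo.compl]
  · simp
  · intro x hx
    simp [hf0 x hx]

lemma pair_close (n : ℕ) (μP : Measure ℝ) [IsProbabilityMeasure μP] (r : ℝ) (B : ℝ≥0∞)
    (hB : ∀ y, μP {x | |x - y| ≤ r} ≤ B) (u v : Fin n) (huv : u ≠ v) :
    (Measure.pi fun _ : Fin n => μP) {p | |p u - p v| ≤ r} ≤ B := by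
  have hind : iIndepFun (fun (i : Fin n) (w : Fin n → ℝ) => w i)
      (Measure.pi fun _ : Fin n => μP) :=
    iIndepFun_pi (X := fun _ x => x) (fun i => aemeasurable_id)
  have h1 := (indepFun_iff_map_prod_eq_prod_map_map
    (measurable_pi_apply v).aemeasurable (measurable_pi_apply u).aemeasurable).1
    (hind.indepFun huv.symm)
  have hu : Measure.map (fun w : Fin n → ℝ => w u) (Measure.pi fun _ : Fin n => μP) = μP :=
    (measurePreserving_eval (fun _ : Fin n => μP) u).map_eq
  have hv : Measure.map (fun w : Fin n → ℝ => w v) (Measure.pi fun _ : Fin n => μP) = μP :=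
    (measurePreserving_eval (fun _ : Fin n => μP) v).map_eq
  rw [hu, hv] at h1
  have hm : MeasurableSet {q : ℝ × ℝ | |q.2 - q.1| ≤ r} :=
    measurableSet_le (by fun_prop) measurable_const
  have h2 : (Measure.pi fun _ : Fin n => μP) {p | |p u - p v| ≤ r} =
      (μP.prod μP) {q : ℝ × ℝ | |q.2 - q.1| ≤ r} := by
    rw [← h1, Measure.map_apply (by fun_prop) hm]; rfl
  rw [h2, Measure.prod_apply hm]
  calc _ ≤ ∫⁻ _, B ∂μP := lintegral_mono fun y => hB y
    _ = B := by simp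

lemma cond_bound {n l : ℕ} (hl : 0 < l) (p : Fin n → ℝ) (hp : ∀ u, p u ∈ Set.Ioo (0 : ℝ) 1)
    (v : Fin n) {Δ : ℝ} (hΔ : 0 ≤ Δ)
    (hsep : ∀ u, u ≠ v → 4 * Δ < |p u - p v|) :
    (Measure.pi fun u : Fin n => Measure.pi fun _ : Fin l => bern (p u))
      {w | ∃ u, u ≠ v ∧ |empMean (w u) - empMean (w v)| ≤ 2 * Δ} ≤
      n * ENNReal.ofReal (2 * Real.exp (-2 * l * Δ ^ 2)) := by
  have := fun u => bern_isProb (hp u)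
  have hsub : {w : Fin n → Fin l → Bool | ∃ u, u ≠ v ∧
      |empMean (w u) - empMean (w v)| ≤ 2 * Δ} ⊆
      ⋃ u : Fin n, Function.eval u ⁻¹' {x : Fin l → Bool | Δ ≤ |empMean x - p u|} := by
    rintro w ⟨u, huv, hw⟩
    by_contra hcon
    simp only [Set.mem_iUnion, Set.mem_preimage, Function.eval, Set.mem_ofPred_eq, not_exists,
      not_le] at hcon
    have h1 := abs_lt.1 (hcon u)
    have h2 := abs_lt.1 (hcon v)
    have h3 := abs_le.1 hw
    have h4 := hsep u huv
    rcases lt_abs.1 h4 with h | h <;> linarith [h1.1, h1.2, h2.1, h2.2, h3.1, h3.2]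
  refine (measure_mono hsub).trans ((measure_iUnion_fintype_le _ _).trans ?_)
  calc _ ≤ ∑ _u : Fin n, ENNReal.ofReal (2 * Real.exp (-2 * l * Δ ^ 2)) := by
        refine Finset.sum_le_sum fun u _ => ?_
        rw [(measurePreserving_eval (fun u : Fin n => Measure.pi fun _ : Fin l => bern (p u))
          u).measure_preimage (Set.toFinite _).measurableSet.nullMeasurableSet]
        exact hoeff hl (hp u) hΔ
    _ = _ := by simp

lemma law_bound {n l : ℕ} (hl : 0 < l) (μP : Measure ℝ) [IsProbabilityMeasure μP]
    (hae : ∀ᵐ x ∂μP, x ∈ Set.Ioo (0 : ℝ) 1) (v : Fin n) {Δ : ℝ} (hΔ : 0 ≤ Δ) (B : ℝ≥0∞)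
    (hB : ∀ y, μP {x | |x - y| ≤ 4 * Δ} ≤ B) :
    twoStateTrainLaw n l μP
      {q | ∃ u, u ≠ v ∧ |empMean (q.2 u) - empMean (q.2 v)| ≤ 2 * Δ} ≤
      n * B + n * ENNReal.ofReal (2 * Real.exp (-2 * l * Δ ^ 2)) := by
  set A : Set (Fin n → Fin l → Bool) :=
    {w | ∃ u, u ≠ v ∧ |empMean (w u) - empMean (w v)| ≤ 2 * Δ} with hA
  have hAm : MeasurableSet A := (Set.toFinite A).measurableSet
  have hS : MeasurableSet (Prod.snd ⁻¹' A : Set ((Fin n → ℝ) × (Fin n → Fin l → Bool))) :=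
    measurable_snd hAm
  let π := Measure.pi fun _ : Fin n => μP
  let C : Set (Fin n → ℝ) := ⋃ u : {u : Fin n // u ≠ v}, {p | |p u - p v| ≤ 4 * Δ}
  have hCm : MeasurableSet C :=
    MeasurableSet.iUnion fun u => measurableSet_le (by fun_prop) measurable_const
  have hC : π C ≤ n * B := by
    refine (measure_iUnion_fintype_le _ _).trans ?_
    calc _ ≤ ∑ _u : {u : Fin n // u ≠ v}, B :=
          Finset.sum_le_sum fun u _ => pair_close n μP _ B hB u v u.2
      _ = (Fintype.card {u : Fin n // u ≠ v} : ℝ≥0∞) * B := by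
        rw [Finset.sum_const, nsmul_eq_mul, Finset.card_univ]
      _ ≤ n * B := by
        gcongr
        exact (Fintype.card_subtype_le _).trans (by simp)
  have hall : ∀ᵐ p ∂π, ∀ u, p u ∈ Set.Ioo (0 : ℝ) 1 := by
    rw [ae_all_iff]
    intro u
    exact (Measure.quasiMeasurePreserving_eval (fun _ : Fin n => μP) u).ae hae
  set K : ℝ≥0∞ := n * ENNReal.ofReal (2 * Real.exp (-2 * l * Δ ^ 2)) with hK
  calc twoStateTrainLaw n l μP (Prod.snd ⁻¹' A)
      ≤ ∫⁻ p, ((Measure.dirac p).prod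
      (Measure.pi fun u : Fin n => Measure.pi fun _ : Fin l => bern (p u))) (Prod.snd ⁻¹' A) ∂π :=
        Measure.bind_apply_le _ hS
    _ ≤ ∫⁻ p, (C.indicator (fun _ => 1) p + K) ∂π := by
        refine lintegral_mono_ae ?_
        filter_upwards [hall] with p hp
        have := fun u => bern_isProb (hp u)
        have hpre : (Prod.snd ⁻¹' A : Set ((Fin n → ℝ) × (Fin n → Fin l → Bool))) =
          Set.univ ×ˢ A := by ext; simp
        rw [hpre, Measure.prod_prod, measure_univ, one_mul]
        by_cases hpC : p ∈ C
        · rw [Set.indicator_of_mem hpC]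
          exact prob_le_one.trans le_self_add
        · rw [Set.indicator_of_notMem hpC, zero_add]
          refine cond_bound hl p hp v hΔ fun u hu => ?_
          by_contra hcon
          exact hpC (Set.mem_iUnion.2 ⟨⟨u, hu⟩, not_lt.1 hcon⟩)
    _ = π C + K := by
        rw [lintegral_add_right _ measurable_const, lintegral_indicator hCm]
        simp [π]
    _ ≤ n * B + K := by gcongr

lemma tail_tendsto (c' α δ₂ : ℝ) (hc' : 0 < c') (hα : 0 < α) :
    Tendsto (fun n : ℕ => 8 * δ₂ * (n : ℝ) ^ (-(α / 4)) +
      2 * ((n : ℝ) * Real.exp (-(2 * c') * (n : ℝ) ^ (α / 2)))) atTop (nhds 0) := by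
  have h1 : Tendsto (fun n : ℕ => (n : ℝ) ^ (-(α / 4))) atTop (nhds 0) :=
    (tendsto_rpow_neg_atTop (by positivity)).comp tendsto_natCast_atTop_atTop
  have h2 : Tendsto (fun n : ℕ => (n : ℝ) * Real.exp (-(2 * c') * (n : ℝ) ^ (α / 2)))
      atTop (nhds 0) := by
    have h3 := (tendsto_rpow_mul_exp_neg_mul_atTop_nhds_zero (2 / α) (2 * c') (by positivity)).comp
      ((tendsto_rpow_atTop (y := α / 2) (by positivity)).comp tendsto_natCast_atTop_atTop)
    refine h3.congr fun n => ?_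
    simp only [Function.comp]
    rw [← Real.rpow_mul (by positivity)]
    have : α / 2 * (2 / α) = 1 := by field_simp
    rw [this, Real.rpow_one]
  simpa using (h1.const_mul (8 * δ₂)).add (h2.const_mul 2)

/-- **Separation of the training empirical means in the two-state i.i.d. model.**
With `l n = ⌈c' n^{2+α}⌉` and `Δ_n = n^{-(1+α/4)}`, the training-trace empirical means
satisfy `P(⋃_{u=2}^n {|W̄_u − W̄_1| ≤ 2 Δ_n}) → 0` as `n → ∞`. -/
theorem training_means_separation
    (f : ℝ → ℝ) (δ₁ δ₂ : ℝ) (hδ₁ : 0 < δ₁)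
    (μP : Measure ℝ) [IsProbabilityMeasure μP]
    (hμP : μP = volume.withDensity fun x => ENNReal.ofReal (f x))
    (hf0 : ∀ x ∉ Set.Ioo (0 : ℝ) 1, f x = 0)
    (hf : ∀ x ∈ Set.Ioo (0 : ℝ) 1, δ₁ < f x ∧ f x < δ₂)
    (l : ℕ → ℕ) (c' α : ℝ) (hc' : 0 < c') (hα : 0 < α)
    (hl : ∀ n : ℕ, l n = ⌈c' * (n : ℝ) ^ ((2 : ℝ) + α)⌉₊)
    (Ω : ℕ → Type) (mΩ : ∀ n, MeasurableSpace (Ω n))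
    (μ : ∀ n, Measure (Ω n)) (hμ : ∀ n, IsProbabilityMeasure (μ n))
    (P : ∀ n, Ω n → Fin n → ℝ)
    (W : ∀ n, Ω n → Fin n → Fin (l n) → Bool)
    (hP : ∀ n, Measurable (P n)) (hW : ∀ n, Measurable (W n))
    (hlaw : ∀ n, Measure.map (fun ω => (P n ω, W n ω)) (μ n) =
      twoStateTrainLaw n (l n) μP) :
    Tendsto (fun n =>
        (μ n {ω | ∃ (hn : 0 < n) (u : Fin n), u ≠ ⟨0, hn⟩ ∧
            |empMean (W n ω u) - empMean (W n ω ⟨0, hn⟩)| ≤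
              2 * (n : ℝ) ^ (-(1 + α / 4))}).toReal)
      atTop (nhds 0) := by
  have hδ : 0 ≤ δ₂ := by
    have := hf (1/2) (by norm_num)
    linarith
  refine tendsto_of_tendsto_of_tendsto_of_le_of_le' tendsto_const_nhds
    (tail_tendsto c' α δ₂ hc' hα) (Eventually.of_forall fun n => ENNReal.toReal_nonneg) ?_
  filter_upwards [eventually_gt_atTop 0] with n hn
  have hn' : (0 : ℝ) < n := by exact_mod_cast hn
  have hln : c' * (n : ℝ) ^ ((2 : ℝ) + α) ≤ l n := by
    rw [hl n]; exact Nat.le_ceil _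
  have hlpos : 0 < l n := by
    have : (0 : ℝ) < l n := lt_of_lt_of_le (by positivity) hln
    exact_mod_cast this
  set Δ : ℝ := (n : ℝ) ^ (-(1 + α / 4)) with hΔ
  have hΔ0 : 0 ≤ Δ := by positivity
  have hlaw' := law_bound hlpos μP (by rw [hμP]; exact muP_ae f hf0) ⟨0, hn⟩ hΔ0
    (ENNReal.ofReal (2 * (4 * Δ) * δ₂))
    (fun y => by rw [hμP]; exact muP_Icc_le f δ₁ δ₂ hδ₁ hf0 hf y _)
  set A : Set (Fin n → Fin (l n) → Bool) :=
    {w | ∃ u, u ≠ ⟨0, hn⟩ ∧ |empMean (w u) - empMean (w ⟨0, hn⟩)| ≤ 2 * Δ} with hA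
  have hAm : MeasurableSet A := (Set.toFinite A).measurableSet
  have hset : {ω | ∃ (hn : 0 < n) (u : Fin n), u ≠ ⟨0, hn⟩ ∧
            |empMean (W n ω u) - empMean (W n ω ⟨0, hn⟩)| ≤ 2 * Δ} =
      (fun ω => (P n ω, W n ω)) ⁻¹' (Prod.snd ⁻¹' A) := by
    ext ω
    simp [hA, hn]
  have hlaw2 : twoStateTrainLaw n (l n) μP (Prod.snd ⁻¹' A) ≤
      n * ENNReal.ofReal (2 * (4 * Δ) * δ₂) +
        n * ENNReal.ofReal (2 * Real.exp (-2 * (l n) * Δ ^ 2)) := hlaw'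
  rw [← hlaw n, Measure.map_apply ((hP n).prodMk (hW n)) (measurable_snd hAm), ← hset] at hlaw2
  have hR : (n : ℝ≥0∞) * ENNReal.ofReal (2 * (4 * Δ) * δ₂) +
        n * ENNReal.ofReal (2 * Real.exp (-2 * (l n) * Δ ^ 2)) =
      ENNReal.ofReal (n * (2 * (4 * Δ) * δ₂) + n * (2 * Real.exp (-2 * (l n) * Δ ^ 2))) := by
    rw [ENNReal.ofReal_add (by positivity) (by positivity), ENNReal.ofReal_mul hn'.le,
      ENNReal.ofReal_mul hn'.le, ENNReal.ofReal_natCast]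
  rw [hR] at hlaw2
  refine (ENNReal.toReal_le_of_le_ofReal (by positivity) hlaw2).trans ?_
  have e1 : (n : ℝ) * Δ = (n : ℝ) ^ (-(α / 4)) := by
    rw [hΔ]
    nth_rewrite 1 [← Real.rpow_one (n : ℝ)]
    rw [← Real.rpow_add hn']
    congr 1; ring
  have e2 : c' * (n : ℝ) ^ (α / 2) ≤ l n * Δ ^ 2 := by
    have h3 : c' * (n : ℝ) ^ ((2 : ℝ) + α) * Δ ^ 2 = c' * (n : ℝ) ^ (α / 2) := by
      rw [hΔ, ← Real.rpow_natCast, ← Real.rpow_mul hn'.le, mul_assoc, ← Real.rpow_add hn']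
      congr 2; push_cast; ring
    rw [← h3]
    gcongr
  have e3 : Real.exp (-2 * (l n) * Δ ^ 2) ≤ Real.exp (-(2 * c') * (n : ℝ) ^ (α / 2)) := by
    apply Real.exp_le_exp.2
    linarith
  have e4 := mul_le_mul_of_nonneg_left e3 hn'.le
  rw [← e1]
  linarith
end

section
/- In the r-state i.i.d. model with m(n) = ⌈c·n^{2/(r−1)+α}⌉ and l(n) = ⌈c'·n^{2/(r−1)+α}⌉ for some constants c > 0, c' > 0 and α > 0, and with Δ'_n = n^{−(1/(r−1)+α/4)}, the empirical frequency vectors satisfy P(max_{1 ≤ i ≤ r−1} |X̄_1(i) − W̄_1(i)| ≤ Δ'_n) → 1 as n → ∞, where X̄_u(i) = |{k ≤ m : X_u(k) = i}|/m and W̄_u(i) = |{k ≤ l : W_u(k) = i}|/l. -/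
open MeasureTheory ProbabilityTheory Filter
open scoped ENNReal NNReal

/-- Discrete measure on `Fin r` assigning mass `q i` to the point `i`. -/
noncomputable def catMeasure (r : ℕ) (q : Fin r → ℝ) : Measure (Fin r) :=
  ∑ i : Fin r, ENNReal.ofReal (q i) • Measure.dirac i

/-- Extend a parameter vector `(p 1, …, p (r-1))` (probabilities of the values `1, …, r-1`)
to a full probability vector on `{0, 1, …, r-1}`, value `0` receiving the remaining mass. -/
noncomputable def fullProb (r : ℕ) (p : Fin (r - 1) → ℝ) : Fin r → ℝ := fun i =>
  if h : (i : ℕ) = 0 then 1 - ∑ j, p j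
  else p ⟨(i : ℕ) - 1, by have := i.isLt; omega⟩

/-- Joint law of (parameters, actual traces, training traces) in the `r`-state i.i.d. model:
the parameter vectors `p u` are i.i.d. with law `μP`, and conditionally on the parameters the
`n` actual traces (of length `m`) and training traces (of length `l`) consist of i.i.d.
samples from `{0, …, r-1}` where value `i ≥ 1` has probability `p u i` and value `0` the
remaining probability; all traces are mutually independent. -/
noncomputable def rStateLaw (n m l r : ℕ) (μP : Measure (Fin (r - 1) → ℝ)) :
    Measure ((Fin n → Fin (r - 1) → ℝ) × (Fin n → Fin m → Fin r) × (Fin n → Fin l → Fin r)) :=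
  (Measure.pi fun _ : Fin n => μP).bind fun p =>
    (Measure.dirac p).prod
      ((Measure.pi fun u : Fin n =>
          Measure.pi fun _ : Fin m => catMeasure r (fullProb r (p u))).prod
        (Measure.pi fun u : Fin n =>
          Measure.pi fun _ : Fin l => catMeasure r (fullProb r (p u))))

/-- Empirical frequency of the value `i` in a sample `x` of size `m`. -/
noncomputable def empFreq {m r : ℕ} (x : Fin m → Fin r) (i : Fin r) : ℝ :=
  ((Finset.univ.filter fun k => x k = i).card : ℝ) / m


lemma catMeasure_isProb (r : ℕ) (q : Fin r → ℝ) (h0 : ∀ i, 0 ≤ q i) (h1 : ∑ i, q i = 1) :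
    IsProbabilityMeasure (catMeasure r q) := by
  constructor
  simp only [catMeasure, Measure.coe_finset_sum, Finset.sum_apply, Measure.smul_apply,
    measure_univ, smul_eq_mul, mul_one]
  rw [← ENNReal.ofReal_sum_of_nonneg (fun i _ => h0 i), h1, ENNReal.ofReal_one]

lemma fullProb_nonneg (r : ℕ) (p : Fin (r - 1) → ℝ) (hp : p ∈ simplexRegion (r - 1)) (i : Fin r) :
    0 ≤ fullProb r p i := by
  unfold fullProb
  split_ifs with h
  · linarith [hp.2]
  · exact (hp.1 _).le

lemma fullProb_sum (r : ℕ) (hr : 2 ≤ r) (p : Fin (r - 1) → ℝ) :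
    ∑ i, fullProb r p i = 1 := by
  obtain ⟨s, rfl⟩ : ∃ s, r = s + 1 := ⟨r - 1, by omega⟩
  rw [Fin.sum_univ_succ]
  simp [fullProb]

lemma empFreq_cheb (r m : ℕ) (hm : 0 < m) (ν : Measure (Fin r)) [IsProbabilityMeasure ν]
    (i : Fin r) (t : ℝ) (ht : 0 < t) :
    (Measure.pi fun _ : Fin m => ν) {x | t ≤ |empFreq x i - ν.real {i}|} ≤
      ENNReal.ofReal (1 / (m * t ^ 2)) := by
  have hm' : (0 : ℝ) < m := by exact_mod_cast hm
  let g : Fin r → ℝ := fun a => if a = i then (m : ℝ)⁻¹ else 0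
  have hgm : Measurable g := measurable_from_top
  have hgL : MemLp g 2 ν := by
    refine MemLp.of_bound hgm.aestronglyMeasurable ((m : ℝ)⁻¹) (ae_of_all _ fun a => ?_)
    simp only [g]
    split_ifs <;> simp
  have hgi : ∫ a, g a ∂ν = (m : ℝ)⁻¹ * ν.real {i} := by
    have : g = Set.indicator {i} (fun _ => (m : ℝ)⁻¹) := by
      ext a; simp [g, Set.indicator]
    rw [this, integral_indicator (measurableSet_singleton i)]
    simp [mul_comm, Measure.real]
  have hE : (fun x : Fin m → Fin r => empFreq x i) = ∑ k : Fin m, fun x : Fin m → Fin r => g (x k) := by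
    ext x
    simp [empFreq, g, Finset.sum_apply, Finset.sum_ite, div_eq_mul_inv]
  have hcomp : ∀ k : Fin m, MemLp (fun x : Fin m → Fin r => g (x k)) 2 (Measure.pi fun _ => ν) :=
    fun k => hgL.comp_measurePreserving (measurePreserving_eval (fun _ : Fin m => ν) k)
  have hL : MemLp (fun x : Fin m → Fin r => empFreq x i) 2 (Measure.pi fun _ => ν) := by
    rw [hE]
    exact memLp_finsetSum' _ fun k _ => hcomp k
  have hmean : ∫ x : Fin m → Fin r, empFreq x i ∂(Measure.pi fun _ => ν) = ν.real {i} := by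
    have : ∀ x : Fin m → Fin r, empFreq x i = ∑ k : Fin m, g (x k) := fun x => by
      have := congrFun hE x
      simpa using this
    simp_rw [this]
    rw [integral_finsetSum _ fun k _ => (hcomp k).integrable (by norm_num)]
    have h2 : ∀ k : Fin m, ∫ x : Fin m → Fin r, g (x k) ∂(Measure.pi fun _ => ν)
        = (m : ℝ)⁻¹ * ν.real {i} := fun k => by
      rw [integral_comp_eval (μ := fun _ : Fin m => ν) hgm.aestronglyMeasurable, hgi]
    simp_rw [h2]
    simp
    field_simp
  have hvar : variance (fun x : Fin m → Fin r => empFreq x i) (Measure.pi fun _ => ν) ≤ 1 / m := by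
    rw [hE, variance_sum_pi (μ := fun _ : Fin m => ν) (X := fun _ => g) fun _ => hgL]
    have hv : variance g ν ≤ (((m : ℝ)⁻¹ - 0) / 2) ^ 2 := by
      refine variance_le_sq_of_bounded (ae_of_all _ fun a => ?_) hgm.aemeasurable
      simp only [g]
      split_ifs <;> simp
    simp only [Finset.sum_const, Finset.card_univ, Fintype.card_fin, nsmul_eq_mul]
    calc (m : ℝ) * variance g ν ≤ m * (((m : ℝ)⁻¹ - 0) / 2) ^ 2 := by gcongr
      _ = (1 / m) / 4 := by field_simp; ring
      _ ≤ 1 / m := by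
        have : (0 : ℝ) < 1 / m := by positivity
        linarith
  have := meas_ge_le_variance_div_sq hL ht
  rw [hmean] at this
  refine this.trans (ENNReal.ofReal_le_ofReal ?_)
  rw [← div_div]
  gcongr

lemma cond_bound_s13 (r n m l : ℕ) (hn : 0 < n) (hm : 0 < m) (hl : 0 < l)
    (ν : Fin n → Measure (Fin r)) [∀ u, IsProbabilityMeasure (ν u)] (D : ℝ) (hD : 0 < D) :
    ((Measure.pi fun u : Fin n => Measure.pi fun _ : Fin m => ν u).prod
      (Measure.pi fun u : Fin n => Measure.pi fun _ : Fin l => ν u))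
      {y | ∃ i : Fin r, D < |empFreq (y.1 ⟨0, hn⟩) i - empFreq (y.2 ⟨0, hn⟩) i|} ≤
    ENNReal.ofReal (r * (4 / (m * D ^ 2) + 4 / (l * D ^ 2))) := by
  set u0 : Fin n := ⟨0, hn⟩
  have hD2 : 0 < D / 2 := by positivity
  let A : ∀ (k : ℕ), Fin r → Set (Fin k → Fin r) :=
    fun k i => {x | D / 2 ≤ |empFreq x i - (ν u0).real {i}|}
  let μ1 := Measure.pi fun u : Fin n => Measure.pi fun _ : Fin m => ν u
  let μ2 := Measure.pi fun u : Fin n => Measure.pi fun _ : Fin l => ν u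
  have hA : ∀ (k : ℕ) (hk : 0 < k) (i : Fin r),
      (Measure.pi fun u : Fin n => Measure.pi fun _ : Fin k => ν u) (Function.eval u0 ⁻¹' A k i)
        ≤ ENNReal.ofReal (4 / (k * D ^ 2)) := by
    intro k hk i
    rw [(measurePreserving_eval (fun u : Fin n => Measure.pi fun _ : Fin k => ν u) u0).measure_preimage
      (Set.toFinite _).measurableSet.nullMeasurableSet]
    refine (empFreq_cheb r k hk (ν u0) i (D / 2) hD2).trans (ENNReal.ofReal_le_ofReal (le_of_eq ?_))
    field_simp
    try norm_num
  have hsub : {y : (Fin n → Fin m → Fin r) × (Fin n → Fin l → Fin r) |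
        ∃ i : Fin r, D < |empFreq (y.1 u0) i - empFreq (y.2 u0) i|} ⊆
      ⋃ i : Fin r, ((Function.eval u0 ⁻¹' A m i) ×ˢ Set.univ ∪
        Set.univ ×ˢ (Function.eval u0 ⁻¹' A l i)) := by
    rintro y ⟨i, hi⟩
    refine Set.mem_iUnion.2 ⟨i, ?_⟩
    by_contra hcon
    simp only [A, Set.mem_union, Set.mem_prod, Set.mem_preimage, Set.mem_univ, and_true, true_and,
      Set.mem_setOf_eq, Function.eval, not_or, not_le, abs_lt] at hcon
    rw [lt_abs] at hi
    rcases hi with hi | hi <;> linarith [hcon.1.1, hcon.1.2, hcon.2.1, hcon.2.2]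
  refine (measure_mono hsub).trans ((measure_iUnion_fintype_le _ _).trans ?_)
  have hterm : ∀ i : Fin r, (μ1.prod μ2) ((Function.eval u0 ⁻¹' A m i) ×ˢ Set.univ ∪
        Set.univ ×ˢ (Function.eval u0 ⁻¹' A l i)) ≤
        ENNReal.ofReal (4 / (m * D ^ 2) + 4 / (l * D ^ 2)) := by
    intro i
    rw [ENNReal.ofReal_add (by positivity) (by positivity)]
    refine (measure_union_le _ _).trans (add_le_add ?_ ?_)
    · rw [Measure.prod_prod, measure_univ, mul_one]; exact hA m hm i
    · rw [Measure.prod_prod, measure_univ, one_mul]; exact hA l hl i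
  refine (Finset.sum_le_sum fun i _ => hterm i).trans (le_of_eq ?_)
  rw [Finset.sum_const, Finset.card_univ, Fintype.card_fin, nsmul_eq_mul,
    ENNReal.ofReal_mul (by positivity), ENNReal.ofReal_natCast]

lemma law_bound_s13 (r n m l : ℕ) (hr : 2 ≤ r) (hn : 0 < n) (hm : 0 < m) (hl : 0 < l)
    (μP : Measure (Fin (r - 1) → ℝ)) [IsProbabilityMeasure μP]
    (hsupp : ∀ᵐ x ∂μP, x ∈ simplexRegion (r - 1)) (D : ℝ) (hD : 0 < D) :
    rStateLaw n m l r μP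
      (Set.univ ×ˢ {y | ∃ i : Fin r, D < |empFreq (y.1 ⟨0, hn⟩) i - empFreq (y.2 ⟨0, hn⟩) i|}) ≤
    ENNReal.ofReal (r * (4 / (m * D ^ 2) + 4 / (l * D ^ 2))) := by
  unfold rStateLaw
  refine (Measure.bind_apply_le _ (MeasurableSet.univ.prod (Set.toFinite _).measurableSet)).trans ?_
  have hae : ∀ᵐ p ∂(Measure.pi fun _ : Fin n => μP), ∀ u, p u ∈ simplexRegion (r - 1) :=
    eventually_all.2 fun u => (Measure.tendsto_eval_ae_ae (μ := fun _ : Fin n => μP)).eventually hsupp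
  calc _ ≤ ∫⁻ _p, ENNReal.ofReal (r * (4 / (m * D ^ 2) + 4 / (l * D ^ 2)))
        ∂(Measure.pi fun _ : Fin n => μP) := by
        refine lintegral_mono_ae ?_
        filter_upwards [hae] with p hp
        haveI : ∀ u, IsProbabilityMeasure (catMeasure r (fullProb r (p u))) := fun u =>
          catMeasure_isProb r _ (fullProb_nonneg r _ (hp u)) (fullProb_sum r hr _)
        rw [Measure.prod_prod, measure_univ, one_mul]
        exact cond_bound_s13 r n m l hn hm hl (fun u => catMeasure r (fullProb r (p u))) D hD
    _ = _ := by simp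

/-- **Closeness of user 1's empirical frequency vectors in the `r`-state i.i.d. model.**
With `m n = ⌈c n^{2/(r-1)+α}⌉`, `l n = ⌈c' n^{2/(r-1)+α}⌉` and
`Δ'_n = n^{-(1/(r-1)+α/4)}`, the empirical frequency vectors satisfy
`P(max_{1 ≤ i ≤ r-1} |X̄_1(i) − W̄_1(i)| ≤ Δ'_n) → 1` as `n → ∞`.  (Since `Y_{Π(1)} = X_1`
under anonymization, `X̄_1` is the anonymized empirical frequency vector `Ȳ_{Π(1)}`.) -/
theorem r_state_user1_freq_close
    (r : ℕ) (hr : 2 ≤ r)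
    (f : (Fin (r - 1) → ℝ) → ℝ) (δ₁ δ₂ : ℝ) (hδ₁ : 0 < δ₁)
    (μP : Measure (Fin (r - 1) → ℝ)) [IsProbabilityMeasure μP]
    (hμP : μP = volume.withDensity fun x => ENNReal.ofReal (f x))
    (hf0 : ∀ x ∉ simplexRegion (r - 1), f x = 0)
    (hf : ∀ x ∈ simplexRegion (r - 1), δ₁ < f x ∧ f x < δ₂)
    (m l : ℕ → ℕ) (c c' α : ℝ) (hc : 0 < c) (hc' : 0 < c') (hα : 0 < α)
    (hm : ∀ n : ℕ, m n = ⌈c * (n : ℝ) ^ (2 / ((r : ℝ) - 1) + α)⌉₊)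
    (hl : ∀ n : ℕ, l n = ⌈c' * (n : ℝ) ^ (2 / ((r : ℝ) - 1) + α)⌉₊)
    (Ω : ℕ → Type) (mΩ : ∀ n, MeasurableSpace (Ω n))
    (μ : ∀ n, Measure (Ω n)) (hμ : ∀ n, IsProbabilityMeasure (μ n))
    (P : ∀ n, Ω n → Fin n → Fin (r - 1) → ℝ)
    (X : ∀ n, Ω n → Fin n → Fin (m n) → Fin r)
    (W : ∀ n, Ω n → Fin n → Fin (l n) → Fin r)
    (hP : ∀ n, Measurable (P n)) (hX : ∀ n, Measurable (X n))
    (hW : ∀ n, Measurable (W n))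
    (hlaw : ∀ n, Measure.map (fun ω => (P n ω, X n ω, W n ω)) (μ n) =
      rStateLaw n (m n) (l n) r μP) :
    Tendsto (fun n =>
        (μ n {ω | ∀ hn : 0 < n, ∀ i : Fin r, (i : ℕ) ≠ 0 →
            |empFreq (X n ω ⟨0, hn⟩) i - empFreq (W n ω ⟨0, hn⟩) i| ≤
              (n : ℝ) ^ (-(1 / ((r : ℝ) - 1) + α / 4))}).toReal)
      atTop (nhds 1) := by
  have hsupp : ∀ᵐ x ∂μP, x ∈ simplexRegion (r - 1) := by
    have hms : MeasurableSet (simplexRegion (r - 1)) := by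
      have h1 : MeasurableSet (⋂ i, {x : Fin (r - 1) → ℝ | 0 < x i}) :=
        MeasurableSet.iInter fun i => measurableSet_lt measurable_const (measurable_pi_apply i)
      have h2 : MeasurableSet {x : Fin (r - 1) → ℝ | ∑ i, x i < 1} :=
        measurableSet_lt (by fun_prop) measurable_const
      convert h1.inter h2 using 1
      ext x
      simp [simplexRegion]
    change μP (simplexRegion (r - 1))ᶜ = 0
    rw [hμP, withDensity_apply _ hms.compl, setLIntegral_congr_fun (g := fun _ => 0) hms.compl]
    · simp
    · intro x hx
      simp [hf0 x hx]
  have hr1 : (0 : ℝ) < (r : ℝ) - 1 := by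
    have : (2 : ℝ) ≤ r := by exact_mod_cast hr
    linarith
  set β : ℝ := 2 / ((r : ℝ) - 1) + α with hβ
  set γ : ℝ := 1 / ((r : ℝ) - 1) + α / 4 with hγ
  have hβγ : β - 2 * γ = α / 2 := by rw [hβ, hγ]; ring
  set K : ℝ := r * (4 / c + 4 / c') with hK
  have key : ∀ (k : ℕ) (d : ℝ), 0 < d → ∀ n : ℕ, 0 < n → k = ⌈d * (n : ℝ) ^ β⌉₊ →
      0 < k ∧ 4 / (k * ((n : ℝ) ^ (-γ)) ^ 2) ≤ 4 / d * (n : ℝ) ^ (-(α / 2)) := by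
    intro k d hd n hn hk
    have hn' : (0 : ℝ) < n := by exact_mod_cast hn
    have hpos : 0 < d * (n : ℝ) ^ β := by positivity
    have hle : d * (n : ℝ) ^ β ≤ k := by rw [hk]; exact Nat.le_ceil _
    refine ⟨by rw [hk]; exact Nat.ceil_pos.2 hpos, ?_⟩
    have h1 : (n : ℝ) ^ β * ((n : ℝ) ^ (-γ)) ^ 2 = (n : ℝ) ^ (α / 2) := by
      rw [← Real.rpow_natCast, ← Real.rpow_mul hn'.le, ← Real.rpow_add hn', ← hβγ]
      congr 1
      push_cast
      ring
    calc 4 / (k * ((n : ℝ) ^ (-γ)) ^ 2) ≤ 4 / (d * (n : ℝ) ^ β * ((n : ℝ) ^ (-γ)) ^ 2) := by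
          gcongr
      _ = 4 / d * (n : ℝ) ^ (-(α / 2)) := by
          rw [mul_assoc, h1, Real.rpow_neg hn'.le, ← div_div, div_eq_mul_inv (4 / d)]
  have hlim : Tendsto (fun n : ℕ => 1 - K * (n : ℝ) ^ (-(α / 2))) atTop (nhds 1) := by
    have h := (tendsto_rpow_neg_atTop (half_pos hα)).comp (tendsto_natCast_atTop_atTop (R := ℝ))
    have h2 := (h.const_mul K).const_sub 1
    simpa using h2
  refine tendsto_of_tendsto_of_tendsto_of_le_of_le' hlim tendsto_const_nhds ?_ ?_
  · filter_upwards [eventually_gt_atTop 0] with n hn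
    have hn' : (0 : ℝ) < n := by exact_mod_cast hn
    obtain ⟨hm0, hmb⟩ := key (m n) c hc n hn (hm n)
    obtain ⟨hl0, hlb⟩ := key (l n) c' hc' n hn (hl n)
    have hlb0 := law_bound_s13 r n (m n) (l n) hr hn hm0 hl0 μP hsupp ((n : ℝ) ^ (-γ)) (by positivity)
    rw [← hlaw n, Measure.map_apply ((hP n).prodMk ((hX n).prodMk (hW n)))
      (MeasurableSet.univ.prod (Set.toFinite _).measurableSet)] at hlb0
    set B : Set (Ω n) := _ with hB
    change μ n B ≤ _ at hlb0
    have hBm : MeasurableSet B := ((hP n).prodMk ((hX n).prodMk (hW n)))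
      (MeasurableSet.univ.prod (Set.toFinite _).measurableSet)
    have hsub : Bᶜ ⊆ {ω | ∀ hn : 0 < n, ∀ i : Fin r, (i : ℕ) ≠ 0 →
            |empFreq (X n ω ⟨0, hn⟩) i - empFreq (W n ω ⟨0, hn⟩) i| ≤ (n : ℝ) ^ (-γ)} := by
      intro ω hω h i _
      by_contra hcon
      exact hω ⟨trivial, i, not_le.1 hcon⟩
    have hBr : (μ n).real B ≤ K * (n : ℝ) ^ (-(α / 2)) := by
      refine ENNReal.toReal_le_of_le_ofReal (by positivity) (hlb0.trans (ENNReal.ofReal_le_ofReal ?_))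
      rw [hK, mul_assoc, add_mul]
      gcongr
    haveI := hμ n
    calc 1 - K * (n : ℝ) ^ (-(α / 2)) ≤ 1 - (μ n).real B := by linarith
      _ = (μ n).real Bᶜ := (probReal_compl_eq_one_sub hBm).symm
      _ ≤ _ := measureReal_mono hsub
  · refine Eventually.of_forall fun n => ?_
    haveI := hμ n
    exact measureReal_le_one
end
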